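/- arXiv:2512.17295 — 2 statements merged into one kernel-verified Lean document; each statement's English description precedes it below -/
import Mathlib

section
/- State transition from (S4): if the pair of SpaceSaving states on neighboring streams is in state (S4) at time t−1 (with t−1 ≥ i and t ≤ T), then after processing the common update x_t the pair is in state (S2), (S3), or (S4) at time t. -/
/-- State of the SpaceSaving algorithm: tracked set, counters (0 for untracked
items), and recency (last occurrence time, 0 if never seen). -/
structure SSState (α : Type) where
  tracked : Finset α
  count : α → ℕ
  recency : α → ℕ

variable {α : Type} [LinearOrder α]

/-- The set of tracked items of minimum counter value. -/
def ssMinSet (s : SSState α) : Finset α :=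
  s.tracked.filter (fun a => ∀ b ∈ s.tracked, s.count a ≤ s.count b)

/-- The eviction victim: among tracked items of minimum counter value, the one
with the largest recency (ties in recency broken by the order on `α`). -/
def ssEvict (s : SSState α) : Option α :=
  if h : ((ssMinSet s).filter (fun a => ∀ b ∈ ssMinSet s, s.recency b ≤ s.recency a)).Nonempty
  then some (((ssMinSet s).filter (fun a => ∀ b ∈ ssMinSet s, s.recency b ≤ s.recency a)).max' h)
  else none

/-- One step of SpaceSaving with capacity `k` at time `t`; a `none` update
contributes nothing. -/
def ssStep (k t : ℕ) (s : SSState α) : Option α → SSState α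
  | none => s
  | some x =>
    if x ∈ s.tracked then
      ⟨s.tracked, Function.update s.count x (s.count x + 1), Function.update s.recency x t⟩
    else if s.tracked.card < k then
      ⟨insert x s.tracked, Function.update s.count x 1, Function.update s.recency x t⟩
    else
      match ssEvict s with
      | none => s
      | some y =>
        ⟨insert x (s.tracked.erase y),
         Function.update (Function.update s.count y 0) x (s.count y + 1),
         Function.update s.recency x t⟩

def ssRunAux (k : ℕ) : SSState α → ℕ → List (Option α) → SSState α
  | s, _, [] => s
  | s, t, x :: xs => ssRunAux k (ssStep k t s x) (t + 1) xs

/-- Run SpaceSaving with capacity `k` on a stream (positions are 1-indexed). -/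
def ssRun (k : ℕ) (X : List (Option α)) : SSState α :=
  ssRunAux k ⟨∅, fun _ => 0, fun _ => 0⟩ 1 X

section NeighborStates

variable {α : Type} [LinearOrder α]

/-- State (S1) of the pair of SpaceSaving data structures on neighboring streams:
(a) the tracked sets coincide; (b) there is `y ∈ T` with `C[y] = C'[y] + 1`;
(c) all other tracked counters coincide. -/
def StateS1 (s s' : SSState α) : Prop :=
  s.tracked = s'.tracked ∧
  ∃ y ∈ s.tracked, s.count y = s'.count y + 1 ∧
    ∀ z ∈ s.tracked, z ≠ y → s.count z = s'.count z

/-- State (S2): (a) `T ≠ T'` with `T \ T' = {z}` and `T' \ T = {z'}`;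
(b) counters agree on `T ∩ T'`; (c) `C[z] = C'[z'] + 1`, `z'` attains the
minimum counter in `T'`, and `C[z] ≤ min_{a ∈ T} C[a] + 1`. -/
def StateS2 (s s' : SSState α) : Prop :=
  s.tracked ≠ s'.tracked ∧
  ∃ z z' : α,
    s.tracked \ s'.tracked = {z} ∧ s'.tracked \ s.tracked = {z'} ∧
    (∀ a ∈ s.tracked ∩ s'.tracked, s.count a = s'.count a) ∧
    s.count z = s'.count z' + 1 ∧
    (∀ a ∈ s'.tracked, s'.count z' ≤ s'.count a) ∧
    (∀ a ∈ s.tracked, s.count z ≤ s.count a + 1)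

/-- State (S3): (a) `T ≠ T'` with `T \ T' = {z}` and `T' \ T = {z'}`;
(b) there is `y ∈ T ∩ T'` with `C[y] = C'[y] + 1` and the counters agree on the
rest of the intersection; (c) `C[z] = C'[z']` and both attain the minimum
counter value of their respective tracked sets. -/
def StateS3 (s s' : SSState α) : Prop :=
  s.tracked ≠ s'.tracked ∧
  ∃ z z' : α,
    s.tracked \ s'.tracked = {z} ∧ s'.tracked \ s.tracked = {z'} ∧
    (∃ y ∈ s.tracked ∩ s'.tracked, s.count y = s'.count y + 1 ∧
      ∀ a ∈ s.tracked ∩ s'.tracked, a ≠ y → s.count a = s'.count a) ∧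
    s.count z = s'.count z' ∧
    (∀ a ∈ s.tracked, s.count z ≤ s.count a) ∧
    (∀ a ∈ s'.tracked, s'.count z' ≤ s'.count a)

/-- State (S4): (a) `T ≠ T'` with `T \ T' = {z₁, z₂}` and `T' \ T = {z₁', z₂'}`;
(b) counters agree on `T ∩ T'`;
(c) `C[z₁] − 1 = C[z₂] = C'[z₁'] = C'[z₂'] = min_{a∈T} C[a] = min_{a∈T'} C'[a]`;
(d) among the minimum-count items of `T'`, the one with largest recency (the
eviction victim of the primed run) belongs to `W' = T' \ T`. -/
def StateS4 (s s' : SSState α) : Prop :=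
  s.tracked ≠ s'.tracked ∧
  ∃ z₁ z₂ z₁' z₂' : α, z₁ ≠ z₂ ∧ z₁' ≠ z₂' ∧
    s.tracked \ s'.tracked = {z₁, z₂} ∧ s'.tracked \ s.tracked = {z₁', z₂'} ∧
    (∀ a ∈ s.tracked ∩ s'.tracked, s.count a = s'.count a) ∧
    s.count z₁ = s.count z₂ + 1 ∧
    s.count z₂ = s'.count z₁' ∧ s'.count z₁' = s'.count z₂' ∧
    (∀ a ∈ s.tracked, s.count z₂ ≤ s.count a) ∧
    (∀ a ∈ s'.tracked, s'.count z₁' ≤ s'.count a) ∧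
    (∃ w, ssEvict s' = some w ∧ w ∈ s'.tracked \ s.tracked)

end NeighborStates

variable {α : Type} [LinearOrder α]

/-- The SpaceSaving state after processing the first `t` positions of the
stream `X` (capacity `k`, positions 1-indexed). -/
def ssNbState (k : ℕ) (X : List α) (t : ℕ) : SSState α :=
  ssRun k ((X.map some).take t)

/-- The SpaceSaving state after processing the first `t` positions of the
neighboring stream `X′`, which is `X` with the single update at (1-indexed)
position `i` removed, i.e. replaced by an empty update contributing nothing. -/
def ssNbState' (k : ℕ) (X : List α) (i t : ℕ) : SSState α :=
  ssRun k (((X.map some).set (i - 1) none).take t)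

/-!
At full capacity a step of SpaceSaving lets the arriving item `x` take over, incremented by one,
the counter of a single item: `x` itself if `x` is tracked, and the eviction victim otherwise. Let
`c` be the common minimum in (S4). If `x` is tracked by both runs, (S4) persists. Otherwise the
primed run gives up one of the two items that it alone tracks, all of counter `c`, and the outcome
is decided by the item `y` that the other run gives up: (S3) if `y = z₁ = x`, (S2) if `y = z₂`, and
(S4) if `y` is common, `y` then replacing the item given up by the primed run.

Condition (d) in the last case rests on the fact that in (S4) common items have equal recency in
the two runs: an item whose last occurrences differ was removed from the neighboring stream and has
not occurred since, so its counters differ. Hence `y`, the latest common item of counter `c` in one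
run, is also the latest one in the other.
-/

section MinSet

variable {β : Type} {s : SSState β} {a b : β}

theorem mem_ssMinSet : a ∈ ssMinSet s ↔ a ∈ s.tracked ∧ ∀ b ∈ s.tracked, s.count a ≤ s.count b :=
  Finset.mem_filter

theorem mem_ssMinSet_iff_count_eq (ha : a ∈ ssMinSet s) :
    b ∈ ssMinSet s ↔ b ∈ s.tracked ∧ s.count b = s.count a := by
  obtain ⟨haT, hmin⟩ := mem_ssMinSet.1 ha
  rw [mem_ssMinSet]
  refine and_congr_right fun hb => ⟨fun h => (h a haT).antisymm (hmin b hb), fun h => ?_⟩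
  rwa [h]

end MinSet

namespace SSState

/-- The state after the arrival, at time `t`, of an item `x` that takes over the counter of `y`.
For `y = x` this is the increment of the counter of a tracked item, so that a step of SpaceSaving
at full capacity always has this form. -/
def replace (s : SSState α) (y x : α) (t : ℕ) : SSState α where
  tracked := insert x (s.tracked.erase y)
  count := Function.update (Function.update s.count y 0) x (s.count y + 1)
  recency := Function.update s.recency x t

/-- `y` is the eviction victim of `s`: it is the latest tracked item of minimum counter value.
The lexicographic order expresses that ties in recency are broken by the order on `α`. -/
def IsVictim (s : SSState α) (y : α) : Prop :=
  y ∈ ssMinSet s ∧ ∀ b ∈ ssMinSet s, toLex (s.recency b, b) ≤ toLex (s.recency y, y)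

/-- `y` is the item of `s` whose counter an arriving item `x` takes over at full capacity: `x`
itself if it is tracked, and the eviction victim otherwise. -/
def Displaces (s : SSState α) (x y : α) : Prop :=
  x ∈ s.tracked ∧ y = x ∨ x ∉ s.tracked ∧ s.IsVictim y

variable {t : ℕ} {s s' : SSState α} {a b x y y' : α}

theorem mem_tracked_replace :
    a ∈ (s.replace y x t).tracked ↔ a = x ∨ a ≠ y ∧ a ∈ s.tracked := by
  simp only [replace, Finset.mem_insert, Finset.mem_erase]

theorem count_replace_self : (s.replace y x t).count x = s.count y + 1 :=
  Function.update_self ..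

theorem count_replace_of_ne (hax : a ≠ x) (hay : a ≠ y) :
    (s.replace y x t).count a = s.count a := by
  simp only [replace, Function.update_of_ne hax, Function.update_of_ne hay]

theorem count_replace_of_mem (hx : x ∈ s.tracked → y = x) (ha : a ∈ s.tracked) (hay : a ≠ y) :
    (s.replace y x t).count a = s.count a :=
  count_replace_of_ne (fun hax => hay (hax.trans (hx (hax ▸ ha)).symm)) hay

theorem count_replace_eq_of_mem_inter
    (hcount : ∀ a ∈ s.tracked ∩ s'.tracked, s.count a = s'.count a)
    (hy : s.count y = s'.count y') :
    ∀ a ∈ (s.replace y x t).tracked ∩ (s'.replace y' x t).tracked,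
      (s.replace y x t).count a = (s'.replace y' x t).count a := by
  intro a ha
  obtain ⟨ha, ha'⟩ := Finset.mem_inter.1 ha
  by_cases hax : a = x
  · rw [hax, count_replace_self, count_replace_self, hy]
  · obtain ⟨hay, ha⟩ := (mem_tracked_replace.1 ha).resolve_left hax
    obtain ⟨hay', ha'⟩ := (mem_tracked_replace.1 ha').resolve_left hax
    rw [count_replace_of_ne hax hay, count_replace_of_ne hax hay',
      hcount a (Finset.mem_inter.2 ⟨ha, ha'⟩)]

theorem tracked_replace_sdiff_tracked_replace (hx : x ∈ s.tracked → y = x)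
    (hy' : y' ∉ s.tracked) : (s.replace y x t).tracked \ (s'.replace y' x t).tracked =
      (s.tracked \ s'.tracked).erase y := by
  ext a
  simp only [Finset.mem_sdiff, Finset.mem_erase, mem_tracked_replace]
  grind

theorem tracked_replace_sdiff_tracked_replace_of_mem (hx : x ∈ s.tracked → y = x)
    (hy' : y' ∈ s.tracked) (hne : y' ≠ y) :
    (s.replace y x t).tracked \ (s'.replace y' x t).tracked =
      insert y' ((s.tracked \ s'.tracked).erase y) := by
  ext a
  simp only [Finset.mem_sdiff, Finset.mem_insert, Finset.mem_erase, mem_tracked_replace]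
  grind

theorem recency_replace_of_ne (hax : a ≠ x) : (s.replace y x t).recency a = s.recency a :=
  Function.update_of_ne hax ..

theorem tracked_replace_self (hx : x ∈ s.tracked) : (s.replace x x t).tracked = s.tracked :=
  Finset.insert_erase hx

theorem le_count_replace {m : ℕ} (hy : y ∈ s.tracked) (hm : ∀ a ∈ s.tracked, m ≤ s.count a) :
    ∀ a ∈ (s.replace y x t).tracked, m ≤ (s.replace y x t).count a := by
  intro a ha
  by_cases hax : a = x
  · rw [hax, count_replace_self]
    exact (hm y hy).trans (Nat.le_succ _)
  · obtain ⟨hay, ha⟩ := (mem_tracked_replace.1 ha).resolve_left hax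
    exact (hm a ha).trans_eq (count_replace_of_ne hax hay).symm

theorem ssMinSet_replace (hx : x ∈ s.tracked → y = x) (hy : y ∈ s.tracked) (ha : a ∈ ssMinSet s)
    (hay : a ≠ y) : ssMinSet (s.replace y x t) = (ssMinSet s).erase y := by
  obtain ⟨haT, hmin⟩ := mem_ssMinSet.1 ha
  have hcount : (s.replace y x t).count a = s.count a := count_replace_of_mem hx haT hay
  have ha' : a ∈ ssMinSet (s.replace y x t) := by
    refine mem_ssMinSet.2 ⟨mem_tracked_replace.2 (.inr ⟨hay, haT⟩), ?_⟩
    rw [hcount]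
    exact le_count_replace hy hmin
  ext b
  rw [mem_ssMinSet_iff_count_eq ha', Finset.mem_erase, mem_ssMinSet_iff_count_eq ha, hcount,
    mem_tracked_replace]
  by_cases hbx : b = x
  · have hgt : s.count y + 1 ≠ s.count a := (Nat.lt_succ_of_le (hmin y hy)).ne'
    rw [hbx, count_replace_self]
    exact iff_of_false (fun h => hgt h.2) fun h => h.1 (hx h.2.1).symm
  · rw [or_iff_right hbx, and_assoc]
    refine and_congr_right fun hby => ?_
    rw [count_replace_of_ne hbx hby]

theorem ssEvict_eq_some_iff : ssEvict s = some y ↔ s.IsVictim y := by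
  set F := (ssMinSet s).filter fun a => ∀ b ∈ ssMinSet s, s.recency b ≤ s.recency a with hF
  have hevict : ssEvict s = some y ↔ y ∈ F ∧ ∀ b ∈ F, b ≤ y := by
    by_cases hne : F.Nonempty
    · rw [ssEvict, dif_pos hne, Option.some_inj, Finset.max'_eq_iff]
    · rw [ssEvict, dif_neg hne]
      simp only [reduceCtorEq, false_iff]
      exact fun h => hne ⟨y, h.1⟩
  rw [hevict]
  simp only [hF, Finset.mem_filter, IsVictim, Prod.Lex.toLex_le_toLex']
  constructor
  · rintro ⟨⟨hy, hrec⟩, htie⟩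
    exact ⟨hy, fun b hb => ⟨hrec b hb,
      fun h => htie b ⟨hb, fun c hc => (hrec c hc).trans_eq h.symm⟩⟩⟩
  · rintro ⟨hy, hlex⟩
    exact ⟨⟨hy, fun b hb => (hlex b hb).1⟩,
      fun b hb => (hlex b hb.1).2 ((hlex b hb.1).1.antisymm (hb.2 y hy))⟩

theorem exists_isVictim (h : s.tracked.Nonempty) : ∃ y, s.IsVictim y := by
  obtain ⟨a, ha, hmin⟩ := s.tracked.exists_min_image s.count h
  exact (ssMinSet s).exists_max_image (fun b => toLex (s.recency b, b))
    ⟨a, mem_ssMinSet.2 ⟨ha, hmin⟩⟩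

theorem IsVictim.mem_tracked (h : s.IsVictim y) : y ∈ s.tracked :=
  (mem_ssMinSet.1 h.1).1

theorem IsVictim.count_le (h : s.IsVictim y) (ha : a ∈ s.tracked) : s.count y ≤ s.count a :=
  (mem_ssMinSet.1 h.1).2 a ha

theorem IsVictim.unique (ha : s.IsVictim a) (hb : s.IsVictim b) : a = b :=
  (Prod.ext_iff.1 (toLex.injective ((hb.2 a ha.1).antisymm (ha.2 b hb.1)))).2

theorem IsVictim.replace_self (h : s.IsVictim y) (hx : x ∈ s.tracked) (hxy : x ≠ y) :
    (s.replace x x t).IsVictim y := by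
  have hmin : ssMinSet (s.replace x x t) = (ssMinSet s).erase x :=
    ssMinSet_replace (fun _ => rfl) hx h.1 hxy.symm
  refine ⟨hmin ▸ Finset.mem_erase.2 ⟨hxy.symm, h.1⟩, fun b hb => ?_⟩
  rw [hmin, Finset.mem_erase] at hb
  rw [recency_replace_of_ne hb.1, recency_replace_of_ne hxy.symm]
  exact h.2 b hb.2

theorem exists_displaces (h : s.tracked.Nonempty) (x : α) : ∃ y, s.Displaces x y := by
  by_cases hx : x ∈ s.tracked
  · exact ⟨x, .inl ⟨hx, rfl⟩⟩
  · obtain ⟨y, hy⟩ := exists_isVictim h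
    exact ⟨y, .inr ⟨hx, hy⟩⟩

theorem Displaces.mem_tracked (h : s.Displaces x y) : y ∈ s.tracked := by
  rcases h with ⟨hx, rfl⟩ | ⟨-, hy⟩
  exacts [hx, hy.mem_tracked]

theorem Displaces.eq_of_mem (h : s.Displaces x y) (hx : x ∈ s.tracked) : y = x :=
  (h.resolve_right fun h' => h'.1 hx).2

theorem Displaces.isVictim_of_notMem (h : s.Displaces x y) (hx : x ∉ s.tracked) : s.IsVictim y :=
  (h.resolve_left fun h' => hx h'.1).2

theorem Displaces.card_tracked_replace (h : s.Displaces x y) :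
    (s.replace y x t).tracked.card = s.tracked.card := by
  have hx : x ∉ s.tracked.erase y := fun hx =>
    (Finset.mem_erase.1 hx).1 (h.eq_of_mem (Finset.mem_of_mem_erase hx)).symm
  rw [replace, Finset.card_insert_of_notMem hx, Finset.card_erase_add_one h.mem_tracked]

end SSState

open SSState

section Step

variable {k t : ℕ} {s : SSState α} {a x y : α}

theorem ssStep_of_mem (hx : x ∈ s.tracked) : ssStep k t s (some x) = s.replace x x t := by
  simp only [ssStep, if_pos hx, replace, Finset.insert_erase hx, Function.update_idem]

theorem ssStep_of_displaces (hk : k ≤ s.tracked.card) (h : s.Displaces x y) :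
    ssStep k t s (some x) = s.replace y x t := by
  rcases h with ⟨hx, rfl⟩ | ⟨hx, hy⟩
  · exact ssStep_of_mem hx
  · simp only [ssStep, if_neg hx, if_neg hk.not_gt, ssEvict_eq_some_iff.2 hy, replace]

theorem ssStep_of_card_lt (hx : x ∉ s.tracked) (hk : s.tracked.card < k) :
    ssStep k t s (some x) = ⟨insert x s.tracked, Function.update s.count x 1,
      Function.update s.recency x t⟩ := by
  simp only [ssStep, if_neg hx, if_pos hk]

theorem ssStep_cases (hk : 1 ≤ k) (s : SSState α) (t : ℕ) (x : α) :
    (x ∉ s.tracked ∧ s.tracked.card < k) ∨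
      ∃ y, s.Displaces x y ∧ ssStep k t s (some x) = s.replace y x t := by
  by_cases hx : x ∈ s.tracked
  · exact .inr ⟨x, .inl ⟨hx, rfl⟩, ssStep_of_mem hx⟩
  · refine (lt_or_ge s.tracked.card k).imp (fun hlt => ⟨hx, hlt⟩) fun hge => ?_
    obtain ⟨y, hy⟩ := exists_displaces (Finset.card_pos.1 (hk.trans hge)) x
    exact ⟨y, hy, ssStep_of_displaces hge hy⟩

theorem recency_ssStep (hk : 1 ≤ k) :
    (ssStep k t s (some x)).recency = Function.update s.recency x t := by
  obtain ⟨hx, hlt⟩ | ⟨y, -, hstep⟩ := ssStep_cases hk s t x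
  · rw [ssStep_of_card_lt hx hlt]
  · rw [hstep, replace]

theorem mem_tracked_and_count_eq_of_mem_ssStep (hk : 1 ≤ k) (hax : a ≠ x)
    (ha : a ∈ (ssStep k t s (some x)).tracked) :
    a ∈ s.tracked ∧ (ssStep k t s (some x)).count a = s.count a := by
  obtain ⟨hx, hlt⟩ | ⟨y, -, hstep⟩ := ssStep_cases hk s t x
  · rw [ssStep_of_card_lt hx hlt] at ha ⊢
    exact ⟨Finset.mem_of_mem_insert_of_ne ha hax, Function.update_of_ne hax ..⟩
  · rw [hstep] at ha ⊢
    obtain ⟨hay, ha⟩ := (mem_tracked_replace.1 ha).resolve_left hax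
    exact ⟨ha, count_replace_of_ne hax hay⟩

theorem tracked_ssStep_subset (hk : 1 ≤ k) :
    (ssStep k t s (some x)).tracked ⊆ insert x s.tracked := by
  intro a ha
  rw [Finset.mem_insert, or_iff_not_imp_left]
  exact fun hax => (mem_tracked_and_count_eq_of_mem_ssStep hk hax ha).1

theorem card_lt_and_tracked_ssStep_of_card_lt (hk : 1 ≤ k)
    (hlt : (ssStep k t s (some x)).tracked.card < k) :
    s.tracked.card < k ∧ (ssStep k t s (some x)).tracked = insert x s.tracked := by
  have hs : s.tracked.card < k := by
    obtain ⟨-, hs⟩ | ⟨y, hy, hstep⟩ := ssStep_cases hk s t x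
    · exact hs
    · rwa [hstep, hy.card_tracked_replace] at hlt
  refine ⟨hs, ?_⟩
  by_cases hx : x ∈ s.tracked
  · rw [ssStep_of_mem hx, tracked_replace_self hx, Finset.insert_eq_of_mem hx]
  · rw [ssStep_of_card_lt hx hs]

end Step

/-- The invariant linking the runs on neighboring streams, `s` being the run that saw the extra
update: a common item whose last occurrences differ is the removed one, not seen since, and `s`
counts it once more; and while `s` has spare capacity it tracks all that `s'` does. -/
structure Coupled (k : ℕ) (s s' : SSState α) : Prop where
  count_eq_of_recency_ne : ∀ a ∈ s.tracked ∩ s'.tracked, s.recency a ≠ s'.recency a →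
    s.count a = s'.count a + 1
  subset_of_card_lt : s.tracked.card < k → s'.tracked ⊆ s.tracked

section Coupled

variable {k : ℕ} {s s' : SSState α}

theorem coupled_ssStep_self (hk : 1 ≤ k) (s : SSState α) (t : ℕ) (x : α) :
    Coupled k (ssStep k t s (some x)) s where
  count_eq_of_recency_ne a ha hrec := by
    obtain rfl : a = x := by
      by_contra hax
      exact hrec (by rw [recency_ssStep hk, Function.update_of_ne hax])
    rw [ssStep_of_mem (Finset.mem_inter.1 ha).2, count_replace_self]
  subset_of_card_lt hlt := by
    rw [(card_lt_and_tracked_ssStep_of_card_lt hk hlt).2]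
    exact Finset.subset_insert x _

theorem Coupled.step (h : Coupled k s s') (hk : 1 ≤ k) (t : ℕ) (x : α) :
    Coupled k (ssStep k t s (some x)) (ssStep k t s' (some x)) where
  count_eq_of_recency_ne a ha hrec := by
    obtain ⟨ha, ha'⟩ := Finset.mem_inter.1 ha
    rw [recency_ssStep hk, recency_ssStep hk] at hrec
    have hax : a ≠ x := by
      rintro rfl
      exact hrec (by rw [Function.update_self, Function.update_self])
    rw [Function.update_of_ne hax, Function.update_of_ne hax] at hrec
    obtain ⟨haT, hcount⟩ := mem_tracked_and_count_eq_of_mem_ssStep hk hax ha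
    obtain ⟨haT', hcount'⟩ := mem_tracked_and_count_eq_of_mem_ssStep hk hax ha'
    rw [hcount, hcount']
    exact h.count_eq_of_recency_ne a (Finset.mem_inter.2 ⟨haT, haT'⟩) hrec
  subset_of_card_lt hlt := by
    obtain ⟨hs, htracked⟩ := card_lt_and_tracked_ssStep_of_card_lt hk hlt
    rw [htracked]
    exact (tracked_ssStep_subset hk).trans
      (Finset.insert_subset_insert x (h.subset_of_card_lt hs))

end Coupled

/-- Conditions (a)-(c) of state (S4) with their witnesses: `z₁` and `z₂` are tracked by `s` only,
`v` and `w` by `s'` only, and `s.count z₂` is the minimum counter value of both states. Condition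
(d) is kept apart because these conditions, unlike (d), are symmetric in `v` and `w`. -/
structure S4Witness (s s' : SSState α) (z₁ z₂ v w : α) : Prop where
  ne : z₁ ≠ z₂
  ne' : v ≠ w
  sdiff_eq : s.tracked \ s'.tracked = {z₁, z₂}
  sdiff_eq' : s'.tracked \ s.tracked = {v, w}
  count_eq : ∀ a ∈ s.tracked ∩ s'.tracked, s.count a = s'.count a
  count_z₁ : s.count z₁ = s.count z₂ + 1
  count_v : s'.count v = s.count z₂
  count_w : s'.count w = s.count z₂
  le_count : ∀ a ∈ s.tracked, s.count z₂ ≤ s.count a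
  le_count' : ∀ a ∈ s'.tracked, s.count z₂ ≤ s'.count a

theorem tracked_ne_of_sdiff_eq_singleton {s s' : SSState α} {z : α}
    (h : s.tracked \ s'.tracked = {z}) : s.tracked ≠ s'.tracked := by
  intro heq
  rw [heq, Finset.sdiff_self] at h
  exact Finset.singleton_ne_empty z h.symm

theorem S4Witness.swap {s s' : SSState α} {z₁ z₂ v w : α} (h : S4Witness s s' z₁ z₂ v w) :
    S4Witness s s' z₁ z₂ w v :=
  { h with
    ne' := h.ne'.symm
    sdiff_eq' := h.sdiff_eq'.trans (Finset.pair_comm v w)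
    count_v := h.count_w
    count_w := h.count_v }

theorem stateS4_iff {s s' : SSState α} :
    StateS4 s s' ↔ ∃ z₁ z₂ v w, S4Witness s s' z₁ z₂ v w ∧ s'.IsVictim w := by
  constructor
  · rintro ⟨-, z₁, z₂, v, w, hz, hvw, hW, hW', hcount, hz₁, hv, hw, hmin, hmin', u, hu, huW⟩
    have hwit : S4Witness s s' z₁ z₂ v w :=
      ⟨hz, hvw, hW, hW', hcount, hz₁, hv.symm, hw.symm.trans hv.symm, hmin, by rwa [hv]⟩
    rw [ssEvict_eq_some_iff] at hu
    rw [hW', Finset.mem_insert, Finset.mem_singleton] at huW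
    rcases huW with rfl | rfl
    exacts [⟨z₁, z₂, w, u, hwit.swap, hu⟩, ⟨z₁, z₂, v, u, hwit, hu⟩]
  · rintro ⟨z₁, z₂, v, w, h, hw⟩
    have hne : s.tracked ≠ s'.tracked := by
      have hz₁ : z₁ ∈ s.tracked \ s'.tracked := h.sdiff_eq ▸ Finset.mem_insert_self _ _
      exact ne_of_mem_of_not_mem' (Finset.mem_sdiff.1 hz₁).1 (Finset.mem_sdiff.1 hz₁).2
    have hwW : w ∈ s'.tracked \ s.tracked :=
      h.sdiff_eq' ▸ Finset.mem_insert_of_mem (Finset.mem_singleton_self w)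
    exact ⟨hne, z₁, z₂, v, w, h.ne, h.ne', h.sdiff_eq, h.sdiff_eq', h.count_eq, h.count_z₁,
      h.count_v.symm, h.count_v.trans h.count_w.symm, h.le_count, h.count_v ▸ h.le_count',
      w, ssEvict_eq_some_iff.2 hw, hwW⟩

namespace S4Witness

variable {t : ℕ} {s s' : SSState α} {z₁ z₂ v w a x y p u : α}

theorem z₁_mem (h : S4Witness s s' z₁ z₂ v w) : z₁ ∈ s.tracked ∧ z₁ ∉ s'.tracked := by
  rw [← Finset.mem_sdiff, h.sdiff_eq]
  exact Finset.mem_insert_self z₁ _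

theorem z₂_mem (h : S4Witness s s' z₁ z₂ v w) : z₂ ∈ s.tracked ∧ z₂ ∉ s'.tracked := by
  rw [← Finset.mem_sdiff, h.sdiff_eq]
  exact Finset.mem_insert_of_mem (Finset.mem_singleton_self z₂)

theorem v_mem (h : S4Witness s s' z₁ z₂ v w) : v ∈ s'.tracked ∧ v ∉ s.tracked := by
  rw [← Finset.mem_sdiff, h.sdiff_eq']
  exact Finset.mem_insert_self v _

theorem w_mem (h : S4Witness s s' z₁ z₂ v w) : w ∈ s'.tracked ∧ w ∉ s.tracked :=
  h.swap.v_mem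

theorem z₂_mem_ssMinSet (h : S4Witness s s' z₁ z₂ v w) : z₂ ∈ ssMinSet s :=
  mem_ssMinSet.2 ⟨h.z₂_mem.1, h.le_count⟩

theorem v_mem_ssMinSet (h : S4Witness s s' z₁ z₂ v w) : v ∈ ssMinSet s' :=
  mem_ssMinSet.2 ⟨h.v_mem.1, h.count_v ▸ h.le_count'⟩

theorem mem_ssMinSet_congr (h : S4Witness s s' z₁ z₂ v w) (ha : a ∈ s.tracked ∩ s'.tracked) :
    a ∈ ssMinSet s ↔ a ∈ ssMinSet s' := by
  rw [mem_ssMinSet_iff_count_eq h.z₂_mem_ssMinSet, mem_ssMinSet_iff_count_eq h.v_mem_ssMinSet,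
    h.count_v, h.count_eq a ha, and_iff_right (Finset.mem_inter.1 ha).1,
    and_iff_right (Finset.mem_inter.1 ha).2]

theorem eq_z₁_or_eq_z₂ (h : S4Witness s s' z₁ z₂ v w) (ha : a ∈ s.tracked) (ha' : a ∉ s'.tracked) :
    a = z₁ ∨ a = z₂ := by
  have haW := Finset.mem_sdiff.2 ⟨ha, ha'⟩
  rwa [h.sdiff_eq, Finset.mem_insert, Finset.mem_singleton] at haW

theorem eq_v_or_eq_w (h : S4Witness s s' z₁ z₂ v w) (ha : a ∈ s'.tracked) (ha' : a ∉ s.tracked) :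
    a = v ∨ a = w := by
  have haW := Finset.mem_sdiff.2 ⟨ha, ha'⟩
  rwa [h.sdiff_eq', Finset.mem_insert, Finset.mem_singleton] at haW

theorem card_eq (h : S4Witness s s' z₁ z₂ v w) : s.tracked.card = s'.tracked.card := by
  rw [← Finset.card_sdiff_eq_card_sdiff_iff, h.sdiff_eq, h.sdiff_eq', Finset.card_pair h.ne,
    Finset.card_pair h.ne']

theorem le_card {k : ℕ} (h : S4Witness s s' z₁ z₂ v w) (hc : Coupled k s s') :
    k ≤ s.tracked.card :=
  not_lt.1 fun hlt => h.v_mem.2 (hc.subset_of_card_lt hlt h.v_mem.1)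

theorem recency_eq {k : ℕ} (h : S4Witness s s' z₁ z₂ v w) (hc : Coupled k s s') :
    ∀ a ∈ s.tracked ∩ s'.tracked, s.recency a = s'.recency a := by
  intro a ha
  by_contra hne
  exact Nat.succ_ne_self _ ((hc.count_eq_of_recency_ne a ha hne).symm.trans (h.count_eq a ha))

theorem replace_self (h : S4Witness s s' z₁ z₂ v w) (hx : x ∈ s.tracked) (hx' : x ∈ s'.tracked) :
    S4Witness (s.replace x x t) (s'.replace x x t) z₁ z₂ v w := by
  have hcount : ∀ a, a ∈ s.tracked ∧ a ∉ s'.tracked → (s.replace x x t).count a = s.count a :=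
    fun a ha => count_replace_of_mem (fun _ => rfl) ha.1 (ne_of_mem_of_not_mem hx' ha.2).symm
  have hcount' : ∀ a, a ∈ s'.tracked ∧ a ∉ s.tracked → (s'.replace x x t).count a = s'.count a :=
    fun a ha => count_replace_of_mem (fun _ => rfl) ha.1 (ne_of_mem_of_not_mem hx ha.2).symm
  have hxcount : s.count x = s'.count x := h.count_eq x (Finset.mem_inter.2 ⟨hx, hx'⟩)
  refine ⟨h.ne, h.ne', ?_, ?_, count_replace_eq_of_mem_inter h.count_eq hxcount, ?_, ?_, ?_, ?_, ?_⟩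
  · rw [tracked_replace_self hx, tracked_replace_self hx', h.sdiff_eq]
  · rw [tracked_replace_self hx, tracked_replace_self hx', h.sdiff_eq']
  · rw [hcount z₁ h.z₁_mem, hcount z₂ h.z₂_mem, h.count_z₁]
  · rw [hcount' v h.v_mem, hcount z₂ h.z₂_mem, h.count_v]
  · rw [hcount' w h.w_mem, hcount z₂ h.z₂_mem, h.count_w]
  · rw [hcount z₂ h.z₂_mem]
    exact le_count_replace hx h.le_count
  · rw [hcount z₂ h.z₂_mem]
    exact le_count_replace hx' h.le_count'

theorem stateS3_replace (h : S4Witness s s' z₁ z₂ v w) :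
    StateS3 (s.replace z₁ z₁ t) (s'.replace w z₁ t) := by
  have hz₁' : z₁ ∈ s'.tracked → w = z₁ := fun hz₁ => absurd hz₁ h.z₁_mem.2
  have hz₂ : (s.replace z₁ z₁ t).count z₂ = s.count z₂ :=
    count_replace_of_mem (fun _ => rfl) h.z₂_mem.1 h.ne.symm
  have hv : (s'.replace w z₁ t).count v = s.count z₂ :=
    (count_replace_of_mem hz₁' h.v_mem.1 h.ne').trans h.count_v
  have hsdiff : (s.replace z₁ z₁ t).tracked \ (s'.replace w z₁ t).tracked = {z₂} := by
    rw [tracked_replace_sdiff_tracked_replace (fun _ => rfl) h.w_mem.2, h.sdiff_eq,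
      Finset.erase_insert (Finset.notMem_singleton.2 h.ne)]
  have hsdiff' : (s'.replace w z₁ t).tracked \ (s.replace z₁ z₁ t).tracked = {v} := by
    rw [tracked_replace_sdiff_tracked_replace hz₁' h.z₁_mem.2, h.swap.sdiff_eq',
      Finset.erase_insert (Finset.notMem_singleton.2 h.ne'.symm)]
  refine ⟨tracked_ne_of_sdiff_eq_singleton hsdiff, z₂, v, hsdiff, hsdiff',
    ⟨z₁, ?_, ?_, fun a ha haz => ?_⟩, hz₂.trans hv.symm, ?_, ?_⟩
  · exact Finset.mem_inter.2 ⟨mem_tracked_replace.2 (.inl rfl), mem_tracked_replace.2 (.inl rfl)⟩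
  · rw [count_replace_self, count_replace_self, h.count_z₁, h.count_w]
  · obtain ⟨ha, ha'⟩ := Finset.mem_inter.1 ha
    obtain ⟨-, ha⟩ := (mem_tracked_replace.1 ha).resolve_left haz
    obtain ⟨haw, ha'⟩ := (mem_tracked_replace.1 ha').resolve_left haz
    rw [count_replace_of_ne haz haz, count_replace_of_ne haz haw,
      h.count_eq a (Finset.mem_inter.2 ⟨ha, ha'⟩)]
  · rw [hz₂]
    exact le_count_replace h.z₁_mem.1 h.le_count
  · rw [hv]
    exact le_count_replace h.w_mem.1 h.le_count'

theorem stateS2_replace (h : S4Witness s s' z₁ z₂ v w) (hx : x ∈ s.tracked → z₂ = x)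
    (hx' : x ∈ s'.tracked → w = x) : StateS2 (s.replace z₂ x t) (s'.replace w x t) := by
  have hz₁ : (s.replace z₂ x t).count z₁ = s.count z₂ + 1 :=
    (count_replace_of_mem hx h.z₁_mem.1 h.ne).trans h.count_z₁
  have hv : (s'.replace w x t).count v = s.count z₂ :=
    (count_replace_of_mem hx' h.v_mem.1 h.ne').trans h.count_v
  have hsdiff : (s.replace z₂ x t).tracked \ (s'.replace w x t).tracked = {z₁} := by
    rw [tracked_replace_sdiff_tracked_replace hx h.w_mem.2, h.sdiff_eq, Finset.pair_comm,
      Finset.erase_insert (Finset.notMem_singleton.2 h.ne.symm)]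
  have hsdiff' : (s'.replace w x t).tracked \ (s.replace z₂ x t).tracked = {v} := by
    rw [tracked_replace_sdiff_tracked_replace hx' h.z₂_mem.2, h.swap.sdiff_eq',
      Finset.erase_insert (Finset.notMem_singleton.2 h.ne'.symm)]
  refine ⟨tracked_ne_of_sdiff_eq_singleton hsdiff, z₁, v, hsdiff, hsdiff',
    count_replace_eq_of_mem_inter h.count_eq h.count_w.symm, ?_, ?_, fun a ha => ?_⟩
  · rw [hz₁, hv]
  · rw [hv]
    exact le_count_replace h.w_mem.1 h.le_count'
  · rw [hz₁]
    exact Nat.succ_le_succ (le_count_replace h.z₂_mem.1 h.le_count a ha)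

theorem replace_victim (h : S4Witness s s' z₁ z₂ v w) (hx : x ∉ s.tracked)
    (hx' : x ∈ s'.tracked → w = x) (hy : s.IsVictim y) (hy' : y ∈ s'.tracked) :
    S4Witness (s.replace y x t) (s'.replace w x t) z₁ z₂ v y := by
  have hxy : x ∈ s.tracked → y = x := fun hxs => absurd hxs hx
  have hycount : s.count y = s.count z₂ :=
    ((mem_ssMinSet_iff_count_eq h.z₂_mem_ssMinSet).1 hy.1).2
  have hyw : y ≠ w := ne_of_mem_of_not_mem hy.mem_tracked h.w_mem.2
  have hvy : v ≠ y := (ne_of_mem_of_not_mem hy.mem_tracked h.v_mem.2).symm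
  have hz₁ : (s.replace y x t).count z₁ = s.count z₁ :=
    count_replace_of_mem hxy h.z₁_mem.1 (ne_of_mem_of_not_mem hy' h.z₁_mem.2).symm
  have hz₂ : (s.replace y x t).count z₂ = s.count z₂ :=
    count_replace_of_mem hxy h.z₂_mem.1 (ne_of_mem_of_not_mem hy' h.z₂_mem.2).symm
  have hv : (s'.replace w x t).count v = s'.count v := count_replace_of_mem hx' h.v_mem.1 h.ne'
  have hyrep : (s'.replace w x t).count y = s'.count y := count_replace_of_mem hx' hy' hyw
  refine ⟨h.ne, hvy, ?_, ?_, count_replace_eq_of_mem_inter h.count_eq ?_, ?_, ?_, ?_, ?_, ?_⟩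
  · rw [tracked_replace_sdiff_tracked_replace hxy h.w_mem.2, Finset.erase_eq_of_notMem
      fun hyW => (Finset.mem_sdiff.1 hyW).2 hy', h.sdiff_eq]
  · rw [tracked_replace_sdiff_tracked_replace_of_mem hx' hy' hyw, h.swap.sdiff_eq',
      Finset.erase_insert (Finset.notMem_singleton.2 h.ne'.symm), Finset.pair_comm]
  · rw [hycount, h.count_w]
  · rw [hz₁, hz₂, h.count_z₁]
  · rw [hv, hz₂, h.count_v]
  · rw [hyrep, hz₂, ← h.count_eq y (Finset.mem_inter.2 ⟨hy.mem_tracked, hy'⟩), hycount]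
  · rw [hz₂]
    exact le_count_replace hy.mem_tracked h.le_count
  · rw [hz₂]
    exact le_count_replace h.w_mem.1 h.le_count'

theorem eq_or_eq_of_isVictim_replace (h : S4Witness s s' z₁ z₂ v w)
    (hrec : ∀ a ∈ s.tracked ∩ s'.tracked, s.recency a = s'.recency a) (hx : x ∉ s.tracked)
    (hx' : x ∈ s'.tracked → w = x) (hy : s.IsVictim y) (hy' : y ∈ s'.tracked)
    (hu : (s'.replace w x t).IsVictim u) : u = v ∨ u = y := by
  have hyT : y ∈ s.tracked := hy.mem_tracked
  have hyI : y ∈ s.tracked ∩ s'.tracked := Finset.mem_inter.2 ⟨hyT, hy'⟩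
  have hmin : ssMinSet (s'.replace w x t) = (ssMinSet s').erase w :=
    ssMinSet_replace hx' h.w_mem.1 h.v_mem_ssMinSet h.ne'
  obtain ⟨huw, humin⟩ := Finset.mem_erase.1 (hmin ▸ hu.1)
  have huT' : u ∈ s'.tracked := (mem_ssMinSet.1 humin).1
  by_cases huT : u ∈ s.tracked
  · have huI : u ∈ s.tracked ∩ s'.tracked := Finset.mem_inter.2 ⟨huT, huT'⟩
    have huy : toLex (s.recency u, u) ≤ toLex (s.recency y, y) :=
      hy.2 u ((h.mem_ssMinSet_congr huI).2 humin)
    have hyu : toLex (s.recency y, y) ≤ toLex (s.recency u, u) := by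
      rw [hrec y hyI, hrec u huI, ← recency_replace_of_ne (ne_of_mem_of_not_mem hyT hx),
        ← recency_replace_of_ne (ne_of_mem_of_not_mem huT hx)]
      exact hu.2 y (hmin ▸ Finset.mem_erase.2
        ⟨ne_of_mem_of_not_mem hyT h.w_mem.2, (h.mem_ssMinSet_congr hyI).1 hy.1⟩)
    exact .inr (Prod.ext_iff.1 (toLex.injective (huy.antisymm hyu))).2
  · exact .inl ((h.eq_v_or_eq_w huT' huT).resolve_right huw)

theorem exists_of_displaces (h : S4Witness s s' z₁ z₂ v w) (hw : s'.IsVictim w)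
    (hp : s'.Displaces x p) (hx : ¬(x ∈ s.tracked ∧ x ∈ s'.tracked)) :
    ∃ q, S4Witness s s' z₁ z₂ q p := by
  have hpW : p = v ∨ p = w := by
    by_cases hx' : x ∈ s'.tracked
    · rw [hp.eq_of_mem hx']
      exact h.eq_v_or_eq_w hx' fun hxs => hx ⟨hxs, hx'⟩
    · exact .inr ((hp.isVictim_of_notMem hx').unique hw)
  rcases hpW with rfl | rfl
  exacts [⟨w, h.swap⟩, ⟨v, h⟩]

theorem eq_z₁_of_displaces (h : S4Witness s s' z₁ z₂ v w) (hz₁ : s.Displaces x z₁) : z₁ = x := by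
  refine (hz₁.resolve_right fun hv => ?_).2
  have hle := hv.2.count_le h.z₂_mem.1
  rw [h.count_z₁] at hle
  exact hle.not_gt (Nat.lt_succ_self _)

end S4Witness

theorem StateS4.stateS2_or_S3_or_S4_replace {t : ℕ} {s s' : SSState α} {x y p : α}
    (h : StateS4 s s')
    (hrec : ∀ a ∈ s.tracked ∩ s'.tracked, s.recency a = s'.recency a)
    (hy : s.Displaces x y) (hp : s'.Displaces x p) :
    StateS2 (s.replace y x t) (s'.replace p x t) ∨
    StateS3 (s.replace y x t) (s'.replace p x t) ∨
    StateS4 (s.replace y x t) (s'.replace p x t) := by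
  obtain ⟨z₁, z₂, v, w, h, hw⟩ := stateS4_iff.1 h
  by_cases hx : x ∈ s.tracked ∧ x ∈ s'.tracked
  · have hxw : x ≠ w := ne_of_mem_of_not_mem hx.1 h.w_mem.2
    rw [hy.eq_of_mem hx.1, hp.eq_of_mem hx.2]
    exact .inr (.inr (stateS4_iff.2
      ⟨z₁, z₂, v, w, h.replace_self hx.1 hx.2, hw.replace_self hx.2 hxw⟩))
  obtain ⟨q, h⟩ := h.exists_of_displaces hw hp hx
  by_cases hy' : y ∈ s'.tracked
  · have hxs : x ∉ s.tracked := fun hxs => hx ⟨hxs, hy.eq_of_mem hxs ▸ hy'⟩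
    have hyv := hy.isVictim_of_notMem hxs
    have hwit := h.replace_victim (t := t) hxs hp.eq_of_mem hyv hy'
    obtain ⟨u, hu⟩ := exists_isVictim ⟨y, hwit.w_mem.1⟩
    refine .inr (.inr (stateS4_iff.2 ?_))
    obtain rfl | rfl := h.eq_or_eq_of_isVictim_replace hrec hxs hp.eq_of_mem hyv hy' hu
    exacts [⟨z₁, z₂, _, _, hwit.swap, hu⟩, ⟨z₁, z₂, _, _, hwit, hu⟩]
  · rcases h.eq_z₁_or_eq_z₂ hy.mem_tracked hy' with rfl | rfl
    · obtain rfl := h.eq_z₁_of_displaces hy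
      exact .inr (.inl h.stateS3_replace)
    · exact .inl (h.stateS2_replace hy.eq_of_mem hp.eq_of_mem)

theorem StateS4.stateS2_or_S3_or_S4_ssStep {k : ℕ} {s s' : SSState α} (h : StateS4 s s')
    (hc : Coupled k s s') (t : ℕ) (x : α) :
    StateS2 (ssStep k t s (some x)) (ssStep k t s' (some x)) ∨
    StateS3 (ssStep k t s (some x)) (ssStep k t s' (some x)) ∨
    StateS4 (ssStep k t s (some x)) (ssStep k t s' (some x)) := by
  obtain ⟨z₁, z₂, v, w, hwit, -⟩ := stateS4_iff.1 h
  have hfull : k ≤ s.tracked.card := hwit.le_card hc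
  have hfull' : k ≤ s'.tracked.card := hfull.trans_eq hwit.card_eq
  obtain ⟨y, hy⟩ := exists_displaces ⟨z₁, hwit.z₁_mem.1⟩ x
  obtain ⟨p, hp⟩ := exists_displaces ⟨w, hwit.w_mem.1⟩ x
  rw [ssStep_of_displaces hfull hy, ssStep_of_displaces hfull' hp]
  exact h.stateS2_or_S3_or_S4_replace (hwit.recency_eq hc) hy hp

theorem ssRunAux_append_singleton (k : ℕ) (l : List (Option α)) (x : Option α) (s : SSState α)
    (t : ℕ) : ssRunAux k s t (l ++ [x]) = ssStep k (t + l.length) (ssRunAux k s t l) x := by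
  induction l generalizing s t with
  | nil => simp [ssRunAux]
  | cons a l ih =>
    simp only [List.cons_append, ssRunAux, ih, List.length_cons]
    congr 1
    omega

theorem ssRun_take_succ (k : ℕ) (l : List (Option α)) {t : ℕ} (ht : t < l.length) :
    ssRun k (l.take (t + 1)) = ssStep k (1 + t) (ssRun k (l.take t)) l[t] := by
  rw [ssRun, ← List.take_concat_get' l t ht, ssRunAux_append_singleton, List.length_take,
    min_eq_left ht.le, ssRun]

theorem ssNbState_succ (k : ℕ) (X : List α) {t : ℕ} (ht : t < X.length) :
    ssNbState k X (t + 1) = ssStep k (1 + t) (ssNbState k X t) (some X[t]) := by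
  rw [ssNbState, ssRun_take_succ k _ (by simpa using ht), ssNbState, List.getElem_map]

theorem ssNbState'_succ (k : ℕ) (X : List α) {i t : ℕ} (hi : 1 ≤ i) (hit : i ≤ t)
    (ht : t < X.length) :
    ssNbState' k X i (t + 1) = ssStep k (1 + t) (ssNbState' k X i t) (some X[t]) := by
  rw [ssNbState', ssRun_take_succ k _ (by simpa using ht), ssNbState',
    List.getElem_set_ne (by omega), List.getElem_map]

theorem ssNbState'_succ_self (k : ℕ) (X : List α) {j : ℕ} (hj : j < X.length) :
    ssNbState' k X (j + 1) (j + 1) = ssNbState k X j := by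
  rw [ssNbState', ssRun_take_succ k _ (by simpa using hj), ssNbState]
  simp [ssStep, List.take_set_of_le]

theorem coupled_ssNbState {k : ℕ} (hk : 1 ≤ k) (X : List α) {i t : ℕ} (hi : 1 ≤ i) (hit : i ≤ t)
    (ht : t ≤ X.length) :
    Coupled k (ssNbState k X t) (ssNbState' k X i t) := by
  induction t, hit using Nat.le_induction with
  | base =>
    obtain ⟨j, rfl⟩ := Nat.exists_eq_add_of_le' hi
    rw [ssNbState'_succ_self k X ht, ssNbState_succ k X ht]
    exact coupled_ssStep_self hk _ _ _
  | succ t hit ih =>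
    rw [ssNbState_succ k X ht, ssNbState'_succ k X hi hit ht]
    exact (ih (by omega)).step hk _ _

/-- **State transition from (S4).**  If the pair of SpaceSaving states on neighboring streams is in state (S4) at time `t` (with `t ≥ i` and `t + 1 ≤ T`), then after processing the common update at position `t + 1` the pair is in state (S2), (S3), or (S4). -/
theorem ss_transition_S4 {α : Type} [LinearOrder α] (k : ℕ) (hk : 1 ≤ k)
    (X : List α) (i : ℕ) (hi1 : 1 ≤ i) (hi2 : i ≤ X.length)
    (t : ℕ) (ht1 : i ≤ t) (ht2 : t + 1 ≤ X.length)
    (h : StateS4 (ssNbState k X t) (ssNbState' k X i t)) :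
    StateS2 (ssNbState k X (t + 1)) (ssNbState' k X i (t + 1)) ∨
    StateS3 (ssNbState k X (t + 1)) (ssNbState' k X i (t + 1)) ∨
    StateS4 (ssNbState k X (t + 1)) (ssNbState' k X i (t + 1)) := by
  rw [ssNbState_succ k X ht2, ssNbState'_succ k X hi1 ht1 ht2]
  exact h.stateS2_or_S3_or_S4_ssStep (coupled_ssNbState hk X hi1 ht1 (by omega)) _ _
end

section
/- Stability of SpaceSaving under neighboring inputs: let (T, C) and (T', C') be the terminal outputs of SpaceSaving with capacity k on neighboring streams X and X' (X' obtained from X by removing one update). Then |T \ T'| ≤ 2 and |T' \ T| ≤ 2 (so |T ∩ T'| ≥ k − 2 when the tables are full); every item in the symmetric difference has counter value (in the run where it is tracked) at most min_{a∈T'} C'[a] + 1; and there exists at most one item x ∈ T ∩ T' with C[x] = C'[x] + 1, while C[y] = C'[y] for every other item y ∈ T ∩ T'. -/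
variable {α : Type} [LinearOrder α]

/-!
Assign to every item the estimate `C[a]` if `a` is tracked and, otherwise, the floor of the table:
the minimum counter if the table is full, and `0` if it has a free slot. Every update sets the
counter of the arriving item to its estimate plus one, so hits, insertions and evictions are
treated alike.

The longer run is ahead by one unit, carried by a single item `x` that it tracks: every item it
tracks has as counter the estimate of the other run, plus one for `x`. The two tables differ only
in items at the floor `m` of the shorter run, apart from `x`, and the items tracked by the shorter
run alone are more recent than all items of counter `m` in the longer run, so they are the next to
be evicted. The carrier remains the same until the longer run has no item of counter `m` left and
an item `z` outside its table arrives. At that moment the shorter run has a single item (or free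
slot) at its floor; the two tables agree once `x` is removed from one and this item from the other,
and `z` becomes the new carrier.
-/

theorem card_insert_erase_of_mem_of_notMem {β : Type*} [DecidableEq β] {S : Finset β} {x z : β}
    (hx : x ∈ S) (hz : z ∉ S) : (insert z (S.erase x)).card = S.card := by
  rw [Finset.card_insert_of_notMem fun h => hz (Finset.mem_of_mem_erase h),
    Finset.card_erase_add_one hx]

theorem exists_ssEvict_eq_some {s : SSState α} (hs : s.tracked.Nonempty) :
    ∃ e, ssEvict s = some e := by
  obtain ⟨a, ha, hmin⟩ := s.tracked.exists_min_image s.count hs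
  obtain ⟨b, hb, hmax⟩ := (ssMinSet s).exists_max_image s.recency
    ⟨a, Finset.mem_filter.mpr ⟨ha, hmin⟩⟩
  exact ⟨_, dif_pos ⟨b, Finset.mem_filter.mpr ⟨hb, hmax⟩⟩⟩

theorem mem_and_recency_le_of_ssEvict_eq_some {s : SSState α} {e : α} (he : ssEvict s = some e) :
    e ∈ ssMinSet s ∧ ∀ b ∈ ssMinSet s, s.recency b ≤ s.recency e := by
  unfold ssEvict at he
  split_ifs at he with h
  obtain rfl := Option.some.inj he
  exact Finset.mem_filter.mp (Finset.max'_mem _ h)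

namespace SSState

section Floor

variable {β : Type} {k : ℕ} {s : SSState β}

/-- The counter inherited by an item entering the table: the minimum counter of a full table, and
`0` if a slot is free. -/
noncomputable def floor (k : ℕ) (s : SSState β) : ℕ :=
  if s.tracked.card < k then 0 else sInf (s.count '' s.tracked)

theorem floor_of_card_lt (h : s.tracked.card < k) : s.floor k = 0 :=
  if_pos h

theorem le_card_of_lt_floor {n : ℕ} (h : n < s.floor k) : k ≤ s.tracked.card := by
  by_contra! hlt
  exact Nat.not_lt_zero n (floor_of_card_lt hlt ▸ h)

theorem floor_le_count {a : β} (ha : a ∈ s.tracked) : s.floor k ≤ s.count a := by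
  unfold floor
  split_ifs
  · exact Nat.zero_le _
  · exact Nat.sInf_le ⟨a, ha, rfl⟩

theorem exists_count_eq_floor (hk : 1 ≤ k) (h : k ≤ s.tracked.card) :
    ∃ a ∈ s.tracked, s.count a = s.floor k := by
  have hne : s.tracked.Nonempty := Finset.card_pos.mp (hk.trans h)
  rw [floor, if_neg h.not_gt]
  exact Nat.sInf_mem ((Finset.coe_nonempty.mpr hne).image s.count)

end Floor

section Step

variable {k t : ℕ} {s : SSState α} {a e z : α}

/-- The upper estimate of the frequency of `a` given by the table: its counter if it is tracked,
and the floor otherwise. -/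
noncomputable def estimate (k : ℕ) (s : SSState α) (a : α) : ℕ :=
  if a ∈ s.tracked then s.count a else s.floor k

theorem estimate_of_mem (ha : a ∈ s.tracked) : s.estimate k a = s.count a :=
  if_pos ha

theorem estimate_of_notMem (ha : a ∉ s.tracked) : s.estimate k a = s.floor k :=
  if_neg ha

theorem floor_le_estimate : s.floor k ≤ s.estimate k a := by
  by_cases ha : a ∈ s.tracked
  · exact (floor_le_count ha).trans_eq (estimate_of_mem ha).symm
  · exact (estimate_of_notMem ha).ge

/-- Consistency of a state reached before time `t` with capacity `k`. -/
structure Valid (k t : ℕ) (s : SSState α) : Prop where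
  card_le : s.tracked.card ≤ k
  count_pos : ∀ a ∈ s.tracked, 0 < s.count a
  recency_lt : ∀ a ∈ s.tracked, s.recency a < t
  recency_injOn : Set.InjOn s.recency s.tracked

/-- With capacity `k`, the arrival of `z` in state `s` evicts `e`. -/
structure Evicts (k : ℕ) (s : SSState α) (z e : α) : Prop where
  notMem : z ∉ s.tracked
  le_card : k ≤ s.tracked.card
  ssEvict_eq : ssEvict s = some e

theorem Evicts.mem (h : s.Evicts k z e) : e ∈ s.tracked :=
  (Finset.mem_filter.mp (mem_and_recency_le_of_ssEvict_eq_some h.ssEvict_eq).1).1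

theorem Evicts.count_eq_floor (hk : 1 ≤ k) (h : s.Evicts k z e) : s.count e = s.floor k := by
  obtain ⟨b, hb, hbf⟩ := exists_count_eq_floor hk h.le_card
  refine le_antisymm ?_ (floor_le_count h.mem)
  exact hbf ▸ (Finset.mem_filter.mp (mem_and_recency_le_of_ssEvict_eq_some h.ssEvict_eq).1).2 b hb

theorem Evicts.recency_lt (hs : s.Valid k t) (h : s.Evicts k z e) (ha : a ∈ s.tracked)
    (hae : a ≠ e) (hc : s.count a = s.count e) : s.recency a < s.recency e := by
  obtain ⟨he, hmax⟩ := mem_and_recency_le_of_ssEvict_eq_some h.ssEvict_eq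
  refine (hmax a (Finset.mem_filter.mpr ⟨ha, ?_⟩)).lt_of_ne
    fun heq => hae (hs.recency_injOn ha h.mem heq)
  exact hc ▸ (Finset.mem_filter.mp he).2

theorem Evicts.unique (h : s.Evicts k z e) (ha : s.Evicts k z a) : a = e :=
  Option.some.inj (ha.ssEvict_eq.symm.trans h.ssEvict_eq)

theorem mem_or_card_lt_or_evicts (hk : 1 ≤ k) (s : SSState α) (z : α) :
    z ∈ s.tracked ∨ (z ∉ s.tracked ∧ s.tracked.card < k) ∨ ∃ e, s.Evicts k z e := by
  by_cases hz : z ∈ s.tracked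
  · exact .inl hz
  rcases lt_or_ge s.tracked.card k with h | h
  · exact .inr (.inl ⟨hz, h⟩)
  · obtain ⟨e, he⟩ := exists_ssEvict_eq_some (Finset.card_pos.mp (hk.trans h))
    exact .inr (.inr ⟨e, hz, h, he⟩)

theorem Evicts.ssStep_eq (h : s.Evicts k z e) :
    ssStep k t s (some z) =
      ⟨insert z (s.tracked.erase e),
        Function.update (Function.update s.count e 0) z (s.count e + 1),
        Function.update s.recency z t⟩ := by
  simp only [ssStep, h.notMem, h.le_card.not_gt, h.ssEvict_eq, if_false]

theorem mem_ssStep (hk : 1 ≤ k) :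
    a ∈ (ssStep k t s (some z)).tracked ↔ a = z ∨ a ∈ s.tracked ∧ ¬ s.Evicts k z a := by
  rcases mem_or_card_lt_or_evicts hk s z with hz | ⟨hz, hc⟩ | ⟨e, he⟩
  · have hev : ¬ s.Evicts k z a := fun h => h.notMem hz
    simp only [ssStep, hz, hev, if_true, not_false_eq_true, and_true]
    exact ⟨.inr, fun h => h.elim (fun haz => haz ▸ hz) id⟩
  · have hev : ¬ s.Evicts k z a := fun h => hc.not_ge h.le_card
    simp only [ssStep, hz, hc, hev, if_true, if_false, Finset.mem_insert, not_false_eq_true,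
      and_true]
  · have hev : s.Evicts k z a ↔ a = e := ⟨he.unique, fun h => h ▸ he⟩
    simp only [he.ssStep_eq, hev, Finset.mem_insert, Finset.mem_erase, ne_eq, and_comm]

theorem card_ssStep (hk : 1 ≤ k) (hs : s.Valid k t) :
    (ssStep k t s (some z)).tracked.card = min k (insert z s.tracked).card := by
  have hle := hs.card_le
  rcases mem_or_card_lt_or_evicts hk s z with hz | ⟨hz, hc⟩ | ⟨e, he⟩
  · simp only [ssStep, hz, if_true, Finset.insert_eq_of_mem, min_eq_right hle]
  · simp only [ssStep, hz, hc, if_true, if_false, Finset.card_insert_of_notMem hz]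
    omega
  · have hc := he.le_card
    rw [he.ssStep_eq, card_insert_erase_of_mem_of_notMem he.mem he.notMem,
      Finset.card_insert_of_notMem he.notMem]
    omega

theorem count_ssStep_self (hk : 1 ≤ k) :
    (ssStep k t s (some z)).count z = s.estimate k z + 1 := by
  rcases mem_or_card_lt_or_evicts hk s z with hz | ⟨hz, hc⟩ | ⟨e, he⟩
  · simp only [ssStep, hz, if_true, Function.update_self, estimate_of_mem]
  · simp only [ssStep, hz, hc, if_true, if_false, Function.update_self, not_false_eq_true,
      estimate_of_notMem, floor_of_card_lt]
  · rw [he.ssStep_eq, estimate_of_notMem he.notMem, ← he.count_eq_floor hk]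
    exact Function.update_self ..

theorem count_ssStep_of_ne (hk : 1 ≤ k) (ha : a ∈ (ssStep k t s (some z)).tracked) (haz : a ≠ z) :
    (ssStep k t s (some z)).count a = s.count a := by
  rcases mem_or_card_lt_or_evicts hk s z with hz | ⟨hz, hc⟩ | ⟨e, he⟩
  · simp only [ssStep, hz, if_true, Function.update_of_ne haz]
  · simp only [ssStep, hz, hc, if_true, if_false, Function.update_of_ne haz]
  · have hae : a ≠ e := by
      rintro rfl
      exact ((mem_ssStep hk).mp ha).elim haz fun h => h.2 he
    simp only [he.ssStep_eq, Function.update_of_ne haz, Function.update_of_ne hae]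

theorem recency_ssStep (hk : 1 ≤ k) :
    (ssStep k t s (some z)).recency = Function.update s.recency z t := by
  rcases mem_or_card_lt_or_evicts hk s z with hz | ⟨hz, hc⟩ | ⟨e, he⟩
  · simp only [ssStep, hz, if_true]
  · simp only [ssStep, hz, hc, if_true, if_false]
  · rw [he.ssStep_eq]

theorem mem_ssStep_self (hk : 1 ≤ k) : z ∈ (ssStep k t s (some z)).tracked :=
  (mem_ssStep hk).mpr (.inl rfl)

theorem mem_of_mem_ssStep (hk : 1 ≤ k) (ha : a ∈ (ssStep k t s (some z)).tracked) (haz : a ≠ z) :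
    a ∈ s.tracked :=
  (((mem_ssStep hk).mp ha).resolve_left haz).1

theorem evicts_of_notMem_ssStep (hk : 1 ≤ k) (ha : a ∈ s.tracked)
    (ha₁ : a ∉ (ssStep k t s (some z)).tracked) : s.Evicts k z a := by
  by_contra h
  exact ha₁ ((mem_ssStep hk).mpr (.inr ⟨ha, h⟩))

theorem recency_ssStep_self (hk : 1 ≤ k) : (ssStep k t s (some z)).recency z = t := by
  rw [recency_ssStep hk, Function.update_self]

theorem recency_ssStep_of_ne (hk : 1 ≤ k) (haz : a ≠ z) :
    (ssStep k t s (some z)).recency a = s.recency a := by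
  rw [recency_ssStep hk, Function.update_of_ne haz]

theorem Valid.step (hk : 1 ≤ k) (hs : s.Valid k t) (z : α) :
    (ssStep k t s (some z)).Valid k (t + 1) where
  card_le := (card_ssStep hk hs).trans_le (min_le_left ..)
  count_pos a ha := by
    rcases eq_or_ne a z with rfl | haz
    · exact (Nat.succ_pos _).trans_eq (count_ssStep_self hk).symm
    · exact (count_ssStep_of_ne hk ha haz).symm ▸ hs.count_pos a (mem_of_mem_ssStep hk ha haz)
  recency_lt a ha := by
    rcases eq_or_ne a z with rfl | haz
    · exact (recency_ssStep_self hk).trans_lt t.lt_succ_self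
    · have := hs.recency_lt a (mem_of_mem_ssStep hk ha haz)
      exact (recency_ssStep_of_ne hk haz).trans_lt (this.trans t.lt_succ_self)
  recency_injOn a ha b hb hab := by
    have old_lt {c : α} (hc : c ∈ (ssStep k t s (some z)).tracked) (hcz : c ≠ z) :=
      hs.recency_lt c (mem_of_mem_ssStep hk hc hcz)
    rw [recency_ssStep hk, Function.update_apply, Function.update_apply] at hab
    split_ifs at hab with haz hbz hbz
    · exact haz.trans hbz.symm
    · exact absurd hab (old_lt hb hbz).ne'
    · exact absurd hab (old_lt ha haz).ne
    · exact hs.recency_injOn (mem_of_mem_ssStep hk ha haz) (mem_of_mem_ssStep hk hb hbz) hab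

theorem Valid.run (hk : 1 ≤ k) (L : List α) :
    ∀ {s : SSState α} {t : ℕ}, s.Valid k t →
      (ssRunAux k s t (L.map some)).Valid k (t + L.length) := by
  induction L with
  | nil => exact id
  | cons z L ih =>
    intro s t hs
    rw [List.length_cons, ← Nat.add_assoc, Nat.add_right_comm]
    exact ih (hs.step hk z)

theorem card_lt_of_card_ssStep_lt (hk : 1 ≤ k) (hs : s.Valid k t)
    (h : (ssStep k t s (some z)).tracked.card < k) : s.tracked.card < k := by
  have := Finset.card_le_card (Finset.subset_insert z s.tracked)
  rw [card_ssStep hk hs] at h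
  omega

theorem floor_le_floor_ssStep (hk : 1 ≤ k) (hs : s.Valid k t) :
    s.floor k ≤ (ssStep k t s (some z)).floor k := by
  rcases lt_or_ge (ssStep k t s (some z)).tracked.card k with h | h
  · exact (floor_of_card_lt (card_lt_of_card_ssStep_lt hk hs h)).trans_le (Nat.zero_le _)
  obtain ⟨a, ha, haf⟩ := exists_count_eq_floor hk h
  rw [← haf]
  rcases eq_or_ne a z with rfl | haz
  · exact (floor_le_estimate.trans (Nat.le_succ _)).trans_eq (count_ssStep_self hk).symm
  · exact (count_ssStep_of_ne hk ha haz).symm ▸ floor_le_count (mem_of_mem_ssStep hk ha haz)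

theorem estimate_ssStep_of_mem (hk : 1 ≤ k) (ha : a ∈ (ssStep k t s (some z)).tracked)
    (haz : a ≠ z) : (ssStep k t s (some z)).estimate k a = s.estimate k a := by
  rw [estimate_of_mem ha, count_ssStep_of_ne hk ha haz,
    estimate_of_mem (mem_of_mem_ssStep hk ha haz)]

theorem estimate_eq_floor_of_notMem_ssStep (hk : 1 ≤ k)
    (ha : a ∉ (ssStep k t s (some z)).tracked) : s.estimate k a = s.floor k := by
  by_cases has : a ∈ s.tracked
  · rw [estimate_of_mem has, (evicts_of_notMem_ssStep hk has ha).count_eq_floor hk]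
  · exact estimate_of_notMem has

theorem estimate_ssStep_self (hk : 1 ≤ k) :
    (ssStep k t s (some z)).estimate k z = s.estimate k z + 1 :=
  (estimate_of_mem (mem_ssStep_self hk)).trans (count_ssStep_self hk)

end Step

/-- The invariant relating a state `s` to a state `s'` that has missed one update. The item `x`
carries the missed unit, and `f` translates the times of the run of `s'` into those of the run of
`s`, which is one update ahead. -/
structure Neighboring (k : ℕ) (f : ℕ → ℕ) (s s' : SSState α) (x : α) : Prop where
  mem : x ∈ s.tracked
  card_le : s'.tracked.card ≤ s.tracked.card
  count_self : s.count x = s'.estimate k x + 1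
  count_of_ne : ∀ a ∈ s.tracked, a ≠ x → s.count a = s'.estimate k a
  estimate_eq_floor : ∀ b ∉ s.tracked, s'.estimate k b = s'.floor k
  recency_eq : ∀ a ∈ s.tracked, a ∈ s'.tracked → a ≠ x → s.recency a = f (s'.recency a)
  recency_lt : ∀ a ∈ s.tracked, s.count a = s'.floor k →
    ∀ b ∈ s'.tracked, b ∉ s.tracked → s.recency a < f (s'.recency b)
  eq_of_notMem : ∀ a ∈ s.tracked, a ∉ s'.tracked → a ≠ x →
    ∀ b ∈ s.tracked, b ∉ s'.tracked → b ≠ x → a = b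

theorem Valid.neighboring_step {k t : ℕ} {f : ℕ → ℕ} {s : SSState α} (hk : 1 ≤ k)
    (hs : s.Valid k t) (hf : ∀ r < t, f r = r) (x : α) :
    Neighboring k f (ssStep k t s (some x)) s x where
  mem := mem_ssStep_self hk
  card_le := by
    rw [card_ssStep hk hs]
    exact le_min hs.card_le (Finset.card_le_card (Finset.subset_insert ..))
  count_self := count_ssStep_self hk
  count_of_ne a ha hax := by
    rw [count_ssStep_of_ne hk ha hax, estimate_of_mem (mem_of_mem_ssStep hk ha hax)]
  estimate_eq_floor b hb := estimate_eq_floor_of_notMem_ssStep hk hb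
  recency_eq a _ ha' hax := by
    rw [recency_ssStep_of_ne hk hax, hf _ (hs.recency_lt a ha')]
  recency_lt a ha hc b hb hb₁ := by
    have hax : a ≠ x := by
      rintro rfl
      have hle : s.floor k ≤ s.estimate k a := floor_le_estimate
      rw [count_ssStep_self hk] at hc
      omega
    have hev : s.Evicts k x b := evicts_of_notMem_ssStep hk hb hb₁
    rw [count_ssStep_of_ne hk ha hax, ← hev.count_eq_floor hk] at hc
    rw [recency_ssStep_of_ne hk hax, hf _ (hs.recency_lt b hb)]
    exact hev.recency_lt hs (mem_of_mem_ssStep hk ha hax) (fun hab => hb₁ (hab ▸ ha)) hc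
  eq_of_notMem a ha ha' hax := absurd (mem_of_mem_ssStep hk ha hax) ha'

namespace Neighboring

variable {k t u : ℕ} {f : ℕ → ℕ} {s s' : SSState α} {a b x z : α}

theorem count_le (h : Neighboring k f s s' x) (ha : a ∈ s.tracked) :
    s.count a ≤ s'.estimate k a + 1 := by
  rcases eq_or_ne a x with rfl | hax
  · exact h.count_self.le
  · exact (h.count_of_ne a ha hax).trans_le (Nat.le_succ _)

theorem estimate_le_count (h : Neighboring k f s s' x) (ha : a ∈ s.tracked) :
    s'.estimate k a ≤ s.count a := by
  rcases eq_or_ne a x with rfl | hax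
  · exact h.count_self.symm ▸ Nat.le_succ _
  · exact (h.count_of_ne a ha hax).ge

theorem exists_estimate_eq_floor (hk : 1 ≤ k) (h : Neighboring k f s s' x)
    (hfull : k ≤ s.tracked.card) : ∃ a ∈ s.tracked, s'.estimate k a = s'.floor k := by
  by_cases hsub : s.tracked ⊆ s'.tracked
  · have heq := Finset.eq_of_subset_of_card_le hsub h.card_le
    obtain ⟨a, ha, hc⟩ := exists_count_eq_floor hk (heq ▸ hfull)
    exact ⟨a, heq ▸ ha, (estimate_of_mem ha).trans hc⟩
  · obtain ⟨a, ha, ha'⟩ := Finset.not_subset.mp hsub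
    exact ⟨a, ha, estimate_of_notMem ha'⟩

theorem floor_le_floor (hk : 1 ≤ k) (h : Neighboring k f s s' x) :
    s'.floor k ≤ s.floor k := by
  rcases lt_or_ge s.tracked.card k with hlt | hfull
  · exact (floor_of_card_lt (h.card_le.trans_lt hlt)).trans_le (Nat.zero_le _)
  · obtain ⟨a, ha, hc⟩ := exists_count_eq_floor hk hfull
    exact hc ▸ floor_le_estimate.trans (h.estimate_le_count ha)

theorem floor_le_floor_add_one (hk : 1 ≤ k) (h : Neighboring k f s s' x) :
    s.floor k ≤ s'.floor k + 1 := by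
  rcases lt_or_ge s.tracked.card k with hlt | hfull
  · exact (floor_of_card_lt hlt).trans_le (Nat.zero_le _)
  · obtain ⟨a, ha, hest⟩ := h.exists_estimate_eq_floor hk hfull
    exact (floor_le_count ha).trans (hest ▸ h.count_le ha)

theorem tracked_subset_of_card_lt (h : Neighboring k f s s' x) (hs' : s'.Valid k t)
    (hlt : s'.tracked.card < k) : s'.tracked ⊆ s.tracked := by
  intro b hb
  by_contra hbs
  have hzero := h.estimate_eq_floor b hbs
  rw [estimate_of_mem hb, floor_of_card_lt hlt] at hzero
  exact (hs'.count_pos b hb).ne' hzero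

-- An item tracked by `s'` alone would be at the floor and more recent than `a`, so it would be
-- evicted instead.
theorem tracked_eq_of_evicts (hf : Monotone f) (hk : 1 ≤ k) (h : Neighboring k f s s' x)
    (hs : s.Valid k u) (hs' : s'.Valid k t) (hev : s'.Evicts k z a) (ha : a ∈ s.tracked)
    (hax : a ≠ x) : s.tracked = s'.tracked := by
  have hsub : s'.tracked ⊆ s.tracked := by
    intro b hb
    by_contra hbs
    have hbf : s'.count b = s'.floor k :=
      (estimate_of_mem hb).symm.trans (h.estimate_eq_floor b hbs)
    have haf := hev.count_eq_floor hk
    have hac : s.count a = s'.floor k :=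
      (h.count_of_ne a ha hax).trans ((estimate_of_mem hev.mem).trans haf)
    have hlt := h.recency_lt a ha hac b hb hbs
    rw [h.recency_eq a ha hev.mem hax] at hlt
    have hba : b ≠ a := fun hba => hbs (hba ▸ ha)
    exact hlt.not_ge (hf (hev.recency_lt hs' hb hba (hbf.trans haf.symm)).le)
  exact (Finset.eq_of_subset_of_card_le hsub (hs.card_le.trans hev.le_card)).symm

theorem card_ssStep_le (hk : 1 ≤ k) (h : Neighboring k f s s' x) (hs : s.Valid k u)
    (hs' : s'.Valid k t) :
    (ssStep k t s' (some z)).tracked.card ≤ (ssStep k u s (some z)).tracked.card := by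
  rw [card_ssStep hk hs, card_ssStep hk hs']
  rcases lt_or_ge s'.tracked.card k with hlt | hfull
  · exact min_le_min_left k (Finset.card_le_card
      (Finset.insert_subset_insert z (h.tracked_subset_of_card_lt hs' hlt)))
  · have hfull₁ := (hfull.trans h.card_le).trans
      (Finset.card_le_card (Finset.subset_insert z s.tracked))
    exact (min_le_left ..).trans (le_min le_rfl hfull₁)

section CarrierKept

theorem ne_of_evicts (hk : 1 ≤ k) (h : Neighboring k f s s' x)
    (hz : z ∈ s.tracked ∨ s.floor k = s'.floor k) (hev : s.Evicts k z a) :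
    s.floor k = s'.floor k ∧ a ≠ x := by
  have hfloor := hz.resolve_left hev.notMem
  refine ⟨hfloor, ?_⟩
  rintro rfl
  have hc := hev.count_eq_floor hk
  have hle : s'.floor k ≤ s'.estimate k a := floor_le_estimate
  rw [hfloor, h.count_self] at hc
  omega

theorem carrier_mem_ssStep (hk : 1 ≤ k) (h : Neighboring k f s s' x)
    (hz : z ∈ s.tracked ∨ s.floor k = s'.floor k) : x ∈ (ssStep k u s (some z)).tracked := by
  by_contra hx
  exact (h.ne_of_evicts hk hz (evicts_of_notMem_ssStep hk h.mem hx)).2 rfl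

theorem estimate_eq_floor_of_notMem_ssStep_left (hk : 1 ≤ k) (h : Neighboring k f s s' x)
    (hz : z ∈ s.tracked ∨ s.floor k = s'.floor k) (hb : b ∉ (ssStep k u s (some z)).tracked) :
    s'.estimate k b = s'.floor k := by
  by_cases hbs : b ∈ s.tracked
  · have hev := evicts_of_notMem_ssStep hk hbs hb
    obtain ⟨hfloor, hbx⟩ := h.ne_of_evicts hk hz hev
    rw [← h.count_of_ne b hbs hbx, hev.count_eq_floor hk, hfloor]
  · exact h.estimate_eq_floor b hbs

theorem floor_ssStep_of_notMem_left (hk : 1 ≤ k) (h : Neighboring k f s s' x)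
    (hs' : s'.Valid k t) (hz : z ∈ s.tracked ∨ s.floor k = s'.floor k)
    (hb' : b ∈ (ssStep k t s' (some z)).tracked) (hb : b ∉ (ssStep k u s (some z)).tracked) :
    (ssStep k t s' (some z)).floor k = s'.floor k := by
  have hbz : b ≠ z := fun hbz => hb (hbz ▸ mem_ssStep_self hk)
  refine le_antisymm ?_ (floor_le_floor_ssStep hk hs')
  rw [← h.estimate_eq_floor_of_notMem_ssStep_left hk hz hb, ← estimate_ssStep_of_mem hk hb' hbz]
  exact floor_le_estimate

theorem floor_ssStep_of_notMem_right (hk : 1 ≤ k) (h : Neighboring k f s s' x)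
    (hs : s.Valid k u) (hs' : s'.Valid k t) (hz : z ∈ s.tracked ∨ s.floor k = s'.floor k)
    (ha : a ∈ (ssStep k u s (some z)).tracked) (ha' : a ∉ (ssStep k t s' (some z)).tracked) :
    (ssStep k t s' (some z)).floor k = s'.floor k := by
  refine le_antisymm ?_ (floor_le_floor_ssStep hk hs')
  rcases lt_or_ge (ssStep k t s' (some z)).tracked.card k with hlt | hfull
  · exact (floor_of_card_lt hlt).trans_le (Nat.zero_le _)
  have hsub : ¬ (ssStep k t s' (some z)).tracked ⊆ (ssStep k u s (some z)).tracked := fun hsub =>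
    ha' (Finset.eq_of_subset_of_card_le hsub ((hs.step hk z).card_le.trans hfull) ▸ ha)
  obtain ⟨b, hb', hb⟩ := Finset.not_subset.mp hsub
  exact (h.floor_ssStep_of_notMem_left hk hs' hz hb' hb).le

theorem estimate_ssStep_of_ne (hk : 1 ≤ k) (h : Neighboring k f s s' x)
    (hs : s.Valid k u) (hs' : s'.Valid k t) (hz : z ∈ s.tracked ∨ s.floor k = s'.floor k)
    (ha : a ∈ (ssStep k u s (some z)).tracked) (haz : a ≠ z) :
    (ssStep k t s' (some z)).estimate k a = s'.estimate k a := by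
  by_cases ha' : a ∈ (ssStep k t s' (some z)).tracked
  · exact estimate_ssStep_of_mem hk ha' haz
  · rw [estimate_of_notMem ha', estimate_eq_floor_of_notMem_ssStep hk ha',
      h.floor_ssStep_of_notMem_right hk hs hs' hz ha ha']

theorem recency_lt_ssStep (hk : 1 ≤ k) (h : Neighboring k f s s' x)
    (hs : s.Valid k u) (hs' : s'.Valid k t) (hz : z ∈ s.tracked ∨ s.floor k = s'.floor k)
    (ha : a ∈ (ssStep k u s (some z)).tracked)
    (hc : (ssStep k u s (some z)).count a = (ssStep k t s' (some z)).floor k)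
    (hb' : b ∈ (ssStep k t s' (some z)).tracked) (hb : b ∉ (ssStep k u s (some z)).tracked) :
    (ssStep k u s (some z)).recency a < f ((ssStep k t s' (some z)).recency b) := by
  have hbz : b ≠ z := fun hbz => hb (hbz ▸ mem_ssStep_self hk)
  have hbs' := mem_of_mem_ssStep hk hb' hbz
  rw [h.floor_ssStep_of_notMem_left hk hs' hz hb' hb] at hc
  have haz : a ≠ z := by
    rintro rfl
    have hle : s.floor k ≤ s.estimate k a := floor_le_estimate
    have hle' := h.floor_le_floor hk
    rw [count_ssStep_self hk] at hc
    omega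
  have has := mem_of_mem_ssStep hk ha haz
  rw [count_ssStep_of_ne hk ha haz] at hc
  rw [recency_ssStep_of_ne hk haz, recency_ssStep_of_ne hk hbz]
  by_cases hbs : b ∈ s.tracked
  · have hev := evicts_of_notMem_ssStep hk hbs hb
    obtain ⟨hfloor, hbx⟩ := h.ne_of_evicts hk hz hev
    rw [← h.recency_eq b hbs hbs' hbx]
    have hcb : s.count a = s.count b := hc.trans (hfloor.symm.trans (hev.count_eq_floor hk).symm)
    exact hev.recency_lt hs has (fun hab => hb (hab ▸ ha)) hcb
  · exact h.recency_lt a has hc b hbs' hbs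

theorem eq_of_notMem_ssStep (hf : Monotone f) (hk : 1 ≤ k) (h : Neighboring k f s s' x)
    (hs : s.Valid k u) (hs' : s'.Valid k t)
    (ha : a ∈ s.tracked) (ha' : a ∉ (ssStep k t s' (some z)).tracked) (hax : a ≠ x)
    (hb : b ∈ s.tracked) (hb' : b ∉ (ssStep k t s' (some z)).tracked) (hbx : b ≠ x) : a = b := by
  have evicts {c : α} := evicts_of_notMem_ssStep (t := t) (s := s') (z := z) (a := c) hk
  by_cases has : a ∈ s'.tracked
  · have heq := h.tracked_eq_of_evicts hf hk hs hs' (evicts has ha') ha hax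
    exact (evicts (heq ▸ hb) hb').unique (evicts has ha')
  by_cases hbs : b ∈ s'.tracked
  · have heq := h.tracked_eq_of_evicts hf hk hs hs' (evicts hbs hb') hb hbx
    exact absurd (heq ▸ ha) has
  · exact h.eq_of_notMem a ha has hax b hb hbs hbx

theorem count_ssStep_carrier (hk : 1 ≤ k) (h : Neighboring k f s s' x)
    (hs : s.Valid k u) (hs' : s'.Valid k t) (hz : z ∈ s.tracked ∨ s.floor k = s'.floor k) :
    (ssStep k u s (some z)).count x = (ssStep k t s' (some z)).estimate k x + 1 := by
  rcases eq_or_ne x z with rfl | hxz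
  · rw [count_ssStep_self hk, estimate_ssStep_self hk, estimate_of_mem h.mem, h.count_self]
  · have hx := h.carrier_mem_ssStep (u := u) hk hz
    rw [count_ssStep_of_ne hk hx hxz, h.estimate_ssStep_of_ne hk hs hs' hz hx hxz, h.count_self]

theorem count_ssStep_of_ne_carrier (hk : 1 ≤ k) (h : Neighboring k f s s' x)
    (hs : s.Valid k u) (hs' : s'.Valid k t) (hz : z ∈ s.tracked ∨ s.floor k = s'.floor k)
    (ha : a ∈ (ssStep k u s (some z)).tracked) (hax : a ≠ x) :
    (ssStep k u s (some z)).count a = (ssStep k t s' (some z)).estimate k a := by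
  rcases eq_or_ne a z with rfl | haz
  · rw [count_ssStep_self hk, estimate_ssStep_self hk]
    by_cases has : a ∈ s.tracked
    · rw [estimate_of_mem has, h.count_of_ne a has hax]
    · rw [estimate_of_notMem has, h.estimate_eq_floor a has, hz.resolve_left has]
  · rw [count_ssStep_of_ne hk ha haz, h.estimate_ssStep_of_ne hk hs hs' hz ha haz,
      h.count_of_ne a (mem_of_mem_ssStep hk ha haz) hax]

theorem step_same_carrier (hf : Monotone f) (hk : 1 ≤ k) (h : Neighboring k f s s' x)
    (hs : s.Valid k (f t)) (hs' : s'.Valid k t)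
    (hz : z ∈ s.tracked ∨ s.floor k = s'.floor k) :
    Neighboring k f (ssStep k (f t) s (some z)) (ssStep k t s' (some z)) x where
  mem := h.carrier_mem_ssStep hk hz
  card_le := h.card_ssStep_le hk hs hs'
  count_self := h.count_ssStep_carrier hk hs hs' hz
  count_of_ne a ha hax := h.count_ssStep_of_ne_carrier hk hs hs' hz ha hax
  estimate_eq_floor b hb := by
    by_cases hb' : b ∈ (ssStep k t s' (some z)).tracked
    · have hbz : b ≠ z := fun hbz => hb (hbz ▸ mem_ssStep_self hk)
      rw [estimate_ssStep_of_mem hk hb' hbz, h.estimate_eq_floor_of_notMem_ssStep_left hk hz hb,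
        h.floor_ssStep_of_notMem_left hk hs' hz hb' hb]
    · exact estimate_of_notMem hb'
  recency_eq a ha ha' hax := by
    rcases eq_or_ne a z with rfl | haz
    · rw [recency_ssStep_self hk, recency_ssStep_self hk]
    · rw [recency_ssStep_of_ne hk haz, recency_ssStep_of_ne hk haz]
      exact h.recency_eq a (mem_of_mem_ssStep hk ha haz) (mem_of_mem_ssStep hk ha' haz) hax
  recency_lt a ha hc b hb' hb := h.recency_lt_ssStep hk hs hs' hz ha hc hb' hb
  eq_of_notMem a ha ha' hax b hb hb' hbx := by
    have ne_z {c : α} (hc : c ∉ (ssStep k t s' (some z)).tracked) : c ≠ z :=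
      fun hcz => hc (hcz ▸ mem_ssStep_self hk)
    exact h.eq_of_notMem_ssStep hf hk hs hs' (mem_of_mem_ssStep hk ha (ne_z ha')) ha' hax
      (mem_of_mem_ssStep hk hb (ne_z hb')) hb' hbx

end CarrierKept

section CarrierReplaced

theorem mem_and_count_eq_of_floor_lt (h : Neighboring k f s s' x) (hfloor : s'.floor k < s.floor k)
    (ha : a ∈ s.tracked) (hax : a ≠ x) : a ∈ s'.tracked ∧ s'.count a = s.count a := by
  have hest := h.count_of_ne a ha hax
  by_cases ha' : a ∈ s'.tracked
  · exact ⟨ha', ((estimate_of_mem ha').symm.trans hest.symm)⟩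
  · rw [estimate_of_notMem ha'] at hest
    exact absurd (floor_le_count ha) (hest ▸ hfloor).not_ge

theorem estimate_carrier_of_floor_lt (hk : 1 ≤ k) (h : Neighboring k f s s' x)
    (hfloor : s'.floor k < s.floor k) : s'.estimate k x = s'.floor k := by
  obtain ⟨a, ha, hest⟩ := h.exists_estimate_eq_floor hk
    (le_card_of_lt_floor hfloor)
  obtain rfl : a = x := by
    by_contra hax
    rw [← h.count_of_ne a ha hax] at hest
    exact (hfloor.trans_le (floor_le_count ha)).ne' hest
  exact hest

theorem mem_ssStep_of_floor_lt (hk : 1 ≤ k) (h : Neighboring k f s s' x)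
    (hfloor : s'.floor k < s.floor k) (ha : a ∈ s.tracked) (hax : a ≠ x) :
    a ∈ (ssStep k t s' (some z)).tracked := by
  obtain ⟨ha', hc⟩ := h.mem_and_count_eq_of_floor_lt hfloor ha hax
  by_contra ha₁
  have hev := evicts_of_notMem_ssStep hk ha' ha₁
  exact (hfloor.trans_le (floor_le_count ha)).ne' (hc ▸ hev.count_eq_floor hk)

theorem tracked_ssStep_of_floor_lt (hk : 1 ≤ k) (h : Neighboring k f s s' x) (hs' : s'.Valid k t)
    (hz : z ∉ s.tracked) (hfloor : s'.floor k < s.floor k) :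
    (ssStep k t s' (some z)).tracked = insert z (s.tracked.erase x) := by
  refine (Finset.eq_of_subset_of_card_le (Finset.insert_subset (mem_ssStep_self hk) fun a ha => ?_)
    ((hs'.step hk z).card_le.trans ?_)).symm
  · obtain ⟨hax, has⟩ := Finset.mem_erase.mp ha
    exact h.mem_ssStep_of_floor_lt hk hfloor has hax
  · rw [card_insert_erase_of_mem_of_notMem h.mem hz]
    exact le_card_of_lt_floor hfloor

theorem mem_of_mem_ssStep_of_floor_lt (hk : 1 ≤ k) (h : Neighboring k f s s' x) (hs' : s'.Valid k t)
    (hz : z ∉ s.tracked) (hfloor : s'.floor k < s.floor k)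
    (ha : a ∈ (ssStep k t s' (some z)).tracked) (haz : a ≠ z) : a ≠ x ∧ a ∈ s.tracked := by
  rw [h.tracked_ssStep_of_floor_lt hk hs' hz hfloor] at ha
  exact Finset.mem_erase.mp (Finset.mem_of_mem_insert_of_ne ha haz)

theorem floor_ssStep_of_floor_eq_add_one (hk : 1 ≤ k) (h : Neighboring k f s s' x)
    (hs' : s'.Valid k t) (hz : z ∉ s.tracked) (hfloor : s.floor k = s'.floor k + 1) :
    (ssStep k t s' (some z)).floor k = s.floor k := by
  have hlt : s'.floor k < s.floor k := hfloor ▸ Nat.lt_succ_self _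
  have hcz : (ssStep k t s' (some z)).count z = s.floor k := by
    rw [count_ssStep_self hk, h.estimate_eq_floor z hz, hfloor]
  refine le_antisymm (hcz ▸ floor_le_count (mem_ssStep_self hk)) ?_
  have hfull : k ≤ (ssStep k t s' (some z)).tracked.card := by
    rw [h.tracked_ssStep_of_floor_lt hk hs' hz hlt, card_insert_erase_of_mem_of_notMem h.mem hz]
    exact le_card_of_lt_floor hlt
  obtain ⟨a, ha, hca⟩ := exists_count_eq_floor hk hfull
  rw [← hca]
  rcases eq_or_ne a z with rfl | haz
  · exact hcz.ge
  · obtain ⟨hax, has⟩ := h.mem_of_mem_ssStep_of_floor_lt hk hs' hz hlt ha haz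
    rw [count_ssStep_of_ne hk ha haz, (h.mem_and_count_eq_of_floor_lt hlt has hax).2]
    exact floor_le_count has

theorem recency_lt_ssStep_of_floor_lt (hk : 1 ≤ k) (h : Neighboring k f s s' x)
    (hs : s.Valid k u) (hs' : s'.Valid k t) (hz : z ∉ s.tracked)
    (hfloor : s'.floor k < s.floor k) (ha : a ∈ (ssStep k u s (some z)).tracked)
    (hc : (ssStep k u s (some z)).count a = s.floor k)
    (hb' : b ∈ (ssStep k t s' (some z)).tracked) (hb : b ∉ (ssStep k u s (some z)).tracked) :
    (ssStep k u s (some z)).recency a < f ((ssStep k t s' (some z)).recency b) := by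
  have hbz : b ≠ z := fun hbz => hb (hbz ▸ mem_ssStep_self hk)
  have haz : a ≠ z := by
    rintro rfl
    rw [count_ssStep_self hk, estimate_of_notMem hz] at hc
    exact Nat.succ_ne_self _ hc
  obtain ⟨hbx, hbs⟩ := h.mem_of_mem_ssStep_of_floor_lt hk hs' hz hfloor hb' hbz
  have hev := evicts_of_notMem_ssStep hk hbs hb
  rw [count_ssStep_of_ne hk ha haz, ← hev.count_eq_floor hk] at hc
  rw [recency_ssStep_of_ne hk haz, recency_ssStep_of_ne hk hbz,
    ← h.recency_eq b hbs (h.mem_and_count_eq_of_floor_lt hfloor hbs hbx).1 hbx]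
  exact hev.recency_lt hs (mem_of_mem_ssStep hk ha haz) (fun hab => hb (hab ▸ ha)) hc

theorem eq_carrier_of_notMem_ssStep (hk : 1 ≤ k) (h : Neighboring k f s s' x)
    (hfloor : s'.floor k < s.floor k) (ha : a ∈ s.tracked)
    (ha' : a ∉ (ssStep k t s' (some z)).tracked) : a = x := by
  by_contra hax
  exact ha' (h.mem_ssStep_of_floor_lt hk hfloor ha hax)

theorem count_ssStep_of_floor_eq_add_one (hk : 1 ≤ k) (h : Neighboring k f s s' x)
    (hs' : s'.Valid k t) (hz : z ∉ s.tracked) (hfloor : s.floor k = s'.floor k + 1)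
    (ha : a ∈ (ssStep k u s (some z)).tracked) (haz : a ≠ z) :
    (ssStep k u s (some z)).count a = (ssStep k t s' (some z)).estimate k a := by
  have hlt : s'.floor k < s.floor k := hfloor ▸ Nat.lt_succ_self _
  rw [count_ssStep_of_ne hk ha haz]
  by_cases ha' : a ∈ (ssStep k t s' (some z)).tracked
  · obtain ⟨hax, has⟩ := h.mem_of_mem_ssStep_of_floor_lt hk hs' hz hlt ha' haz
    rw [estimate_ssStep_of_mem hk ha' haz, h.count_of_ne a has hax]
  · obtain rfl := h.eq_carrier_of_notMem_ssStep hk hlt (mem_of_mem_ssStep hk ha haz) ha'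
    rw [estimate_of_notMem ha', h.floor_ssStep_of_floor_eq_add_one hk hs' hz hfloor, h.count_self,
      h.estimate_carrier_of_floor_lt hk hlt, hfloor]

theorem step_new_carrier (hk : 1 ≤ k) (h : Neighboring k f s s' x)
    (hs : s.Valid k (f t)) (hs' : s'.Valid k t) (hz : z ∉ s.tracked)
    (hfloor : s.floor k = s'.floor k + 1) :
    Neighboring k f (ssStep k (f t) s (some z)) (ssStep k t s' (some z)) z := by
  have hlt : s'.floor k < s.floor k := hfloor ▸ Nat.lt_succ_self _
  have hfloor₁ := h.floor_ssStep_of_floor_eq_add_one hk hs' hz hfloor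
  refine
    { mem := mem_ssStep_self hk
      card_le := h.card_ssStep_le hk hs hs'
      count_self := ?_
      count_of_ne := fun a ha haz =>
        h.count_ssStep_of_floor_eq_add_one hk hs' hz hfloor ha haz
      estimate_eq_floor := fun b hb => ?_
      recency_eq := fun a _ ha' haz => ?_
      recency_lt := fun a ha hc b hb' hb =>
        h.recency_lt_ssStep_of_floor_lt hk hs hs' hz hlt ha (hc.trans hfloor₁) hb' hb
      eq_of_notMem := fun a ha ha' haz b hb hb' hbz =>
        (h.eq_carrier_of_notMem_ssStep hk hlt (mem_of_mem_ssStep hk ha haz) ha').trans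
          (h.eq_carrier_of_notMem_ssStep hk hlt (mem_of_mem_ssStep hk hb hbz) hb').symm }
  · rw [count_ssStep_self hk, estimate_ssStep_self hk, estimate_of_notMem hz,
      h.estimate_eq_floor z hz, hfloor]
  · by_cases hb' : b ∈ (ssStep k t s' (some z)).tracked
    · have hbz : b ≠ z := fun hbz => hb (hbz ▸ mem_ssStep_self hk)
      obtain ⟨hbx, hbs⟩ := h.mem_of_mem_ssStep_of_floor_lt hk hs' hz hlt hb' hbz
      rw [estimate_ssStep_of_mem hk hb' hbz, hfloor₁, ← h.count_of_ne b hbs hbx]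
      exact (evicts_of_notMem_ssStep hk hbs hb).count_eq_floor hk
    · exact estimate_of_notMem hb'
  · obtain ⟨hax, has⟩ := h.mem_of_mem_ssStep_of_floor_lt hk hs' hz hlt ha' haz
    rw [recency_ssStep_of_ne hk haz, recency_ssStep_of_ne hk haz]
    exact h.recency_eq a has (mem_of_mem_ssStep hk ha' haz) hax

end CarrierReplaced

theorem exists_step (hf : Monotone f) (hk : 1 ≤ k) (h : Neighboring k f s s' x)
    (hs : s.Valid k (f t)) (hs' : s'.Valid k t) (z : α) :
    ∃ y, Neighboring k f (ssStep k (f t) s (some z)) (ssStep k t s' (some z)) y := by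
  by_cases hz : z ∈ s.tracked ∨ s.floor k = s'.floor k
  · exact ⟨x, h.step_same_carrier hf hk hs hs' hz⟩
  · obtain ⟨hzs, hne⟩ := not_or.mp hz
    have hfloor : s.floor k = s'.floor k + 1 :=
      le_antisymm (h.floor_le_floor_add_one hk) ((h.floor_le_floor hk).lt_of_ne' hne)
    exact ⟨z, h.step_new_carrier hk hs hs' hzs hfloor⟩

theorem exists_run (hf : Monotone f) (hk : 1 ≤ k) (L : List α) :
    ∀ {s s' : SSState α} {t : ℕ} {x : α}, (∀ r ≥ t, f r = r + 1) → Neighboring k f s s' x →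
      s.Valid k (t + 1) → s'.Valid k t →
        ∃ y, Neighboring k f (ssRunAux k s (t + 1) (L.map some))
          (ssRunAux k s' t (L.map some)) y := by
  induction L with
  | nil => exact fun _ h _ _ => ⟨_, h⟩
  | cons z L ih =>
    intro s s' t x hft h hs hs'
    have ht := hft t le_rfl
    obtain ⟨y, hy⟩ := h.exists_step hf hk (ht ▸ hs) hs' z
    rw [ht] at hy
    exact ih (fun r hr => hft r ((Nat.le_succ t).trans hr)) hy (hs.step hk z) (hs'.step hk z)

theorem card_sdiff_le (h : Neighboring k f s s' x) : (s.tracked \ s'.tracked).card ≤ 2 := by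
  have hone : ((s.tracked \ s'.tracked).erase x).card ≤ 1 := by
    refine Finset.card_le_one.mpr fun a ha b hb => ?_
    rw [Finset.mem_erase, Finset.mem_sdiff] at ha hb
    exact h.eq_of_notMem a ha.2.1 ha.2.2 ha.1 b hb.2.1 hb.2.2 hb.1
  exact Nat.le_add_of_sub_le (Finset.pred_card_le_card_erase.trans hone)

theorem card_sdiff_le' (h : Neighboring k f s s' x) : (s'.tracked \ s.tracked).card ≤ 2 :=
  (Finset.card_sdiff_le_card_sdiff_iff.mpr h.card_le).trans h.card_sdiff_le

theorem count_le_of_notMem_right (h : Neighboring k f s s' x) (ha : a ∈ s.tracked)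
    (ha' : a ∉ s'.tracked) (hb : b ∈ s'.tracked) : s.count a ≤ s'.count b + 1 := by
  have hle := h.count_le ha
  rw [estimate_of_notMem ha'] at hle
  exact hle.trans (Nat.succ_le_succ (floor_le_count hb))

theorem count_le_of_notMem_left (h : Neighboring k f s s' x) (ha' : a ∈ s'.tracked)
    (ha : a ∉ s.tracked) (hb : b ∈ s'.tracked) : s'.count a ≤ s'.count b := by
  rw [← estimate_of_mem ha', h.estimate_eq_floor a ha]
  exact floor_le_count hb

theorem count_eq_ite (h : Neighboring k f s s' x) (ha : a ∈ s.tracked) (ha' : a ∈ s'.tracked) :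
    s.count a = s'.count a + if a = x then 1 else 0 := by
  rw [← estimate_of_mem (k := k) ha']
  split_ifs with hax
  · exact hax ▸ h.count_self
  · exact h.count_of_ne a ha hax

end Neighboring

end SSState

theorem ssRunAux_append (k : ℕ) (L M : List (Option α)) :
    ∀ (s : SSState α) (t : ℕ),
      ssRunAux k s t (L ++ M) = ssRunAux k (ssRunAux k s t L) (t + L.length) M := by
  induction L with
  | nil => exact fun _ _ => rfl
  | cons o L ih =>
    intro s t
    rw [List.length_cons, ← Nat.add_assoc, Nat.add_right_comm]
    exact ih _ _

theorem exists_neighboring_ssRun {k : ℕ} (hk : 1 ≤ k) (A B : List α) (x : α) :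
    ∃ f y, SSState.Neighboring k f (ssRun k ((A ++ x :: B).map some))
      (ssRun k ((A ++ B).map some)) y := by
  have hinit : SSState.Valid k 1 (⟨∅, fun _ => 0, fun _ => 0⟩ : SSState α) := by
    constructor <;> simp
  have hA := hinit.run hk A
  simp only [ssRun, List.map_append, List.map_cons, ssRunAux_append, List.length_map, ssRunAux]
  generalize 1 + A.length = t at hA
  have hmono : Monotone fun r => if r < t then r else r + 1 := by
    intro a b hab
    grind
  exact ⟨_, (hA.neighboring_step hk (fun r hr => if_pos hr) x).exists_run hmono hk B
    (fun r hr => if_neg hr.not_gt) (hA.step hk x) hA⟩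

/-- **Stability of SpaceSaving under neighboring inputs.**  Let `(T, C)` and
`(T', C')` be the terminal outputs of SpaceSaving with capacity `k` on
neighboring streams `X = A ++ x :: B` and `X' = A ++ B` (`X'` is `X` with one
update removed).  Then `|T \ T'| ≤ 2` and `|T' \ T| ≤ 2` (so
`|T ∩ T'| ≥ k − 2` when the tables are full); every item of the symmetric
difference has counter value (in the run where it is tracked) at most
`min_{a ∈ T'} C'[a] + 1`; and there is at most one item `x ∈ T ∩ T'` with
`C[x] = C'[x] + 1`, while `C[y] = C'[y]` for every other `y ∈ T ∩ T'`. -/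
theorem ss_neighbor_stability {α : Type} [LinearOrder α] (k : ℕ) (hk : 1 ≤ k)
    (A B : List α) (x : α) (X X' : List α)
    (hX : X = A ++ x :: B) (hX' : X' = A ++ B) :
    (((ssRun k (X.map some)).tracked \ (ssRun k (X'.map some)).tracked).card ≤ 2 ∧
      ((ssRun k (X'.map some)).tracked \ (ssRun k (X.map some)).tracked).card ≤ 2) ∧
    ((ssRun k (X.map some)).tracked.card = k → (ssRun k (X'.map some)).tracked.card = k →
      k - 2 ≤ ((ssRun k (X.map some)).tracked ∩ (ssRun k (X'.map some)).tracked).card) ∧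
    (∀ u ∈ (ssRun k (X.map some)).tracked \ (ssRun k (X'.map some)).tracked,
      ∀ a ∈ (ssRun k (X'.map some)).tracked,
        (ssRun k (X.map some)).count u ≤ (ssRun k (X'.map some)).count a + 1) ∧
    (∀ u ∈ (ssRun k (X'.map some)).tracked \ (ssRun k (X.map some)).tracked,
      ∀ a ∈ (ssRun k (X'.map some)).tracked,
        (ssRun k (X'.map some)).count u ≤ (ssRun k (X'.map some)).count a + 1) ∧
    (∀ y ∈ (ssRun k (X.map some)).tracked ∩ (ssRun k (X'.map some)).tracked,
      (ssRun k (X.map some)).count y = (ssRun k (X'.map some)).count y ∨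
      (ssRun k (X.map some)).count y = (ssRun k (X'.map some)).count y + 1) ∧
    (∀ y z : α,
      y ∈ (ssRun k (X.map some)).tracked ∩ (ssRun k (X'.map some)).tracked →
      z ∈ (ssRun k (X.map some)).tracked ∩ (ssRun k (X'.map some)).tracked →
      (ssRun k (X.map some)).count y = (ssRun k (X'.map some)).count y + 1 →
      (ssRun k (X.map some)).count z = (ssRun k (X'.map some)).count z + 1 → y = z) := by
  subst hX hX'
  obtain ⟨f, p, h⟩ := exists_neighboring_ssRun hk A B x
  generalize ssRun k ((A ++ x :: B).map some) = s at h
  generalize ssRun k ((A ++ B).map some) = s' at h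
  simp only [Finset.mem_sdiff, Finset.mem_inter]
  refine ⟨⟨h.card_sdiff_le, h.card_sdiff_le'⟩, fun hfull _ => ?_,
    fun u hu a ha => h.count_le_of_notMem_right hu.1 hu.2 ha,
    fun u hu a ha => (h.count_le_of_notMem_left hu.1 hu.2 ha).trans (Nat.le_succ _),
    fun y hy => ?_, fun y z hy hz hcy hcz => ?_⟩
  · have hcard := Finset.card_sdiff_add_card_inter s.tracked s'.tracked
    have hsdiff := h.card_sdiff_le
    omega
  · have hcount := h.count_eq_ite hy.1 hy.2
    split_ifs at hcount
    exacts [.inr hcount, .inl hcount]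
  · have eq_carrier {a : α} (ha : a ∈ s.tracked ∧ a ∈ s'.tracked)
        (hc : s.count a = s'.count a + 1) : a = p := by
      by_contra hap
      have hcount := h.count_eq_ite ha.1 ha.2
      rw [if_neg hap] at hcount
      omega
    exact (eq_carrier hy hcy).trans (eq_carrier hz hcz).symm
end
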